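/- arXiv:1510.05455 — 2 statements merged into one kernel-verified Lean document; each statement's English description precedes it below -/
import Mathlib

section
/- Let v be a radial weight in the class D̂ satisfying M₁(v) = sup_{0<r<1} (∫_r¹ v̂(s)/(1-s)² ds)^{1/2} (∫₀^r 1/v̂(s) ds)^{1/2} < ∞ and M₂(v) = sup_{0<r<1} (∫₀^r v̂(s)/(1-s)⁴ ds)^{1/2} (∫_r¹ (1-s)²/v̂(s) ds)^{1/2} < ∞. Then there exists C = C(v) > 0 such that for every function f analytic on the unit disc 𝔻 with ‖f‖_{D_v} < ∞, both H(f)(z) = ∫₀¹ f(t)/(1-tz) dt and H̃(f)(z) = ∫₀¹ |f(t)|/(1-tz) dt define analytic functions on 𝔻 and satisfy ‖H(f)‖_{D_v} ≤ C‖f‖_{D_v} and ‖H̃(f)‖_{D_v} ≤ C‖f‖_{D_v}. -/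
open MeasureTheory Real Set Filter

noncomputable section

/-- `hatw v r = ∫_r^1 v(s) ds`. -/
def hatw (v : ℝ → ℝ) (r : ℝ) : ℝ := ∫ s in r..1, v s

/-- A radial weight: measurable, positive on `[0,1)`, integrable on `(0,1)`. -/
def RadialWeight (v : ℝ → ℝ) : Prop :=
  Measurable v ∧ (∀ r ∈ Set.Ico (0:ℝ) 1, 0 < v r) ∧
    MeasureTheory.IntegrableOn v (Set.Ioo 0 1)

/-- Membership in the class `D̂`. -/
def DoublingD (v : ℝ → ℝ) : Prop :=
  ∃ C : ℝ, 1 ≤ C ∧ ∀ r ∈ Set.Ico (0:ℝ) 1, hatw v r ≤ C * hatw v ((1+r)/2)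

/-- Squared Dirichlet-type norm `‖f‖_{D_v}^2`. -/
def DvSq (v : ℝ → ℝ) (f : ℂ → ℂ) : ENNReal :=
  (‖f 0‖₊ : ENNReal)^2 +
    (ENNReal.ofReal Real.pi)⁻¹ *
      ∫⁻ z in Metric.ball (0:ℂ) 1, (‖deriv f z‖₊ : ENNReal)^2 * ENNReal.ofReal (v ‖z‖)

/-- The Muckenhoupt type quantity `M₁(v)`. -/
def M1v (v : ℝ → ℝ) : ENNReal :=
  ⨆ r ∈ Set.Ioo (0:ℝ) 1,
    (∫⁻ s in Set.Ioo r 1, ENNReal.ofReal (hatw v s / (1-s)^2)) ^ (1/2 : ℝ) *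
    (∫⁻ s in Set.Ioo (0:ℝ) r, ENNReal.ofReal (1 / hatw v s)) ^ (1/2 : ℝ)

/-- The Muckenhoupt type quantity `M₂(v)`. -/
def M2v (v : ℝ → ℝ) : ENNReal :=
  ⨆ r ∈ Set.Ioo (0:ℝ) 1,
    (∫⁻ s in Set.Ioo (0:ℝ) r, ENNReal.ofReal (hatw v s / (1-s)^4)) ^ (1/2 : ℝ) *
    (∫⁻ s in Set.Ioo r 1, ENNReal.ofReal ((1-s)^2 / hatw v s)) ^ (1/2 : ℝ)

/-- The moment `v_x = ∫_0^1 s^x v(s) ds`. -/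
def vx (v : ℝ → ℝ) (x : ℕ) : ℝ := ∫ s in (0:ℝ)..1, s^x * v s

/-- `M_∞(s,f)`, the maximum of `|f|` on the circle of radius `s`. -/
def Minf (f : ℂ → ℂ) (s : ℝ) : ℝ := sSup ((fun z => ‖f z‖) '' Metric.sphere (0:ℂ) s)

/-- `M₂(r,h)`. -/
def M2mean (h : ℂ → ℂ) (r : ℝ) : ℝ :=
  Real.sqrt ((2*Real.pi)⁻¹ * ∫ θ in (-Real.pi)..Real.pi, ‖h ((r:ℂ) * Complex.exp (θ * Complex.I))‖^2)

/-- The norm of `B(2,∞)` (with values in `[0,∞]`). -/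
def B2infE (g : ℂ → ℂ) : ENNReal :=
  (‖g 0‖₊ : ENNReal) +
    ⨆ r ∈ Set.Ioo (0:ℝ) 1, ENNReal.ofReal (M2mean (deriv g) r * Real.sqrt (1-r))

/-- The `p`-th power of the norm of `B(2,p)` (with values in `[0,∞]`). -/
def B2pE (p : ℝ) (g : ℂ → ℂ) : ENNReal :=
  ENNReal.ofReal (‖g 0‖ ^ p) +
    ∫⁻ r in Set.Ioo (0:ℝ) 1, ENNReal.ofReal (M2mean (deriv g) r ^ p * (1-r)^(p/2-1))

/-- The generalized Hilbert operator `H_g`. -/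
def Hg (g f : ℂ → ℂ) (z : ℂ) : ℂ := ∫ t in Set.Ioo (0:ℝ) 1, f t * deriv g (t * z)

/-- The Hilbert operator `H` acting on functions on `[0,1)`. -/
def Hop (φ : ℝ → ℂ) (z : ℂ) : ℂ := ∫ t in Set.Ioo (0:ℝ) 1, φ t / (1 - t * z)

/-- The sublinear Hilbert operator `H̃`. -/
def Htil (φ : ℝ → ℂ) (z : ℂ) : ℂ := ∫ t in Set.Ioo (0:ℝ) 1, (‖φ t‖ : ℂ) / (1 - t * z)

/-- Squared norm in `L²_{V̂₂}`. -/
def L2V2sq (v : ℝ → ℝ) (φ : ℝ → ℂ) : ENNReal :=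
  ∫⁻ t in Set.Ioo (0:ℝ) 1, (‖φ t‖₊ : ENNReal)^2 * ENNReal.ofReal (hatw v t / (1-t)^2)

/-- Taylor coefficient `ĝ(k)` of `g` at the origin. -/
def gcoef (g : ℂ → ℂ) (k : ℕ) : ℂ := iteratedDeriv k g 0 / (Nat.factorial k)

/-!
Both operators only see `|f|` on `[0, 1)`, and the space through which they factor is
`L²(V̂₂)`, with `V̂₂(t) = v̂(t) / (1 - t)²`.

Restriction to `[0, 1)` maps `D_v` into `L²(V̂₂)`: applied to `f'` on each circle, the Fejér–Riesz
inequality bounds `∫₀¹ |f'(t)|² v̂(t) dt` by the Dirichlet integral, and a weighted Hardy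
inequality, whose hypothesis `∫_r¹ V̂₂ ≲ v̂(r) / (1 - r)` comes from `M₁(v) < ∞` and doubling,
passes from the derivative to `f`.

Conversely, `‖(Hψ)'‖²` expands into the double integral of `|ψ(t)| |ψ(s)|` against
`∫ |1 - t z|⁻² |1 - s z|⁻² v(|z|) dA(z)`, which is `≲ v̂(t) / (1 - t)³` and, by symmetry,
`≲ v̂(s) / (1 - s)³`. Using the bound in the smaller of the two variables, the Cauchy–Schwarz
inequality and the dual Hardy inequality, which is where `M₂(v) < ∞` enters once more, bound it
by `‖ψ‖²` in `L²(V̂₂)`.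
-/

open scoped ENNReal NNReal

theorem rpow_half_sq (a : ℝ≥0∞) : (a ^ (1 / 2 : ℝ)) ^ 2 = a := by
  rw [← ENNReal.rpow_natCast, ← ENNReal.rpow_mul]
  norm_num

theorem add_sq_le_two_mul (a b : ℝ≥0∞) : (a + b) ^ 2 ≤ 2 * (a ^ 2 + b ^ 2) := by
  have h := ENNReal.rpow_add_le_mul_rpow_add_rpow a b one_le_two
  norm_num at h
  exact h

section Lintegral

variable {α β : Type*} [MeasurableSpace α] [MeasurableSpace β] {μ : Measure α} {ν : Measure β}

theorem sq_lintegral_le_of_sq_le_mul {F G H : α → ℝ≥0∞} (hG : AEMeasurable G μ)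
    (hH : AEMeasurable H μ) (hF : ∀ᵐ x ∂μ, F x ^ 2 ≤ G x * H x) :
    (∫⁻ x, F x ∂μ) ^ 2 ≤ (∫⁻ x, G x ∂μ) * ∫⁻ x, H x ∂μ := by
  have hle : ∀ᵐ x ∂μ, F x ≤ G x ^ (1 / 2 : ℝ) * H x ^ (1 / 2 : ℝ) := by
    filter_upwards [hF] with x hx
    rw [← ENNReal.pow_le_pow_left_iff two_ne_zero, mul_pow, rpow_half_sq, rpow_half_sq]
    exact hx
  calc (∫⁻ x, F x ∂μ) ^ 2
      ≤ ((∫⁻ x, G x ∂μ) ^ (1 / 2 : ℝ) * (∫⁻ x, H x ∂μ) ^ (1 / 2 : ℝ)) ^ 2 := by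
        gcongr
        exact (lintegral_mono_ae hle).trans
          (ENNReal.lintegral_mul_norm_pow_le hG hH (by norm_num) (by norm_num) (by norm_num))
    _ = (∫⁻ x, G x ∂μ) * ∫⁻ x, H x ∂μ := by rw [mul_pow, rpow_half_sq, rpow_half_sq]

theorem lintegral_setLIntegral_rel [SFinite ν] {R : α → β → Prop}
    (hR : MeasurableSet {p : α × β | R p.1 p.2}) {F : α → β → ℝ≥0∞}
    (hF : AEMeasurable (Function.uncurry F) (μ.prod ν)) :
    ∫⁻ x, ∫⁻ y in {y | R x y}, F x y ∂ν ∂μ =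
      ∫⁻ p in {p | R p.1 p.2}, Function.uncurry F p ∂μ.prod ν := by
  rw [← lintegral_indicator hR, lintegral_prod _ (hF.indicator hR)]
  exact lintegral_congr fun x ↦ (lintegral_indicator (measurable_prodMk_left hR) (F x)).symm

theorem lintegral_setLIntegral_rel_swap [SFinite μ] [SFinite ν] {R : α → β → Prop}
    (hR : MeasurableSet {p : α × β | R p.1 p.2}) {F : α → β → ℝ≥0∞}
    (hF : AEMeasurable (Function.uncurry F) (μ.prod ν)) :
    ∫⁻ x, ∫⁻ y in {y | R x y}, F x y ∂ν ∂μ = ∫⁻ y, ∫⁻ x in {x | R x y}, F x y ∂μ ∂ν := by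
  rw [lintegral_setLIntegral_rel hR hF, ← lintegral_indicator hR,
    lintegral_prod_symm _ (hF.indicator hR)]
  exact lintegral_congr fun y ↦
    lintegral_indicator (measurable_prodMk_right hR) fun x ↦ F x y

theorem aemeasurable_setLIntegral_rel [SFinite ν] {R : α → β → Prop}
    (hR : MeasurableSet {p : α × β | R p.1 p.2}) {F : α → β → ℝ≥0∞}
    (hF : AEMeasurable (Function.uncurry F) (μ.prod ν)) :
    AEMeasurable (fun x ↦ ∫⁻ y in {y | R x y}, F x y ∂ν) μ :=
  (hF.indicator hR).lintegral_prod_right'.congr <| .of_forall fun x ↦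
    lintegral_indicator (measurable_prodMk_left hR) (F x)

theorem measurable_lintegral_mul [SFinite μ] {P : α → β → ℝ≥0∞}
    (hP : Measurable (Function.uncurry P)) :
    Measurable fun p : β × β ↦ ∫⁻ x, P x p.1 * P x p.2 ∂μ := by
  refine Measurable.lintegral_prod_right' (f := fun q : (β × β) × α ↦
    P q.2 q.1.1 * P q.2 q.1.2) ?_
  exact (hP.comp (by fun_prop : Measurable fun q : (β × β) × α ↦ (q.2, q.1.1))).mul
      (hP.comp (by fun_prop : Measurable fun q : (β × β) × α ↦ (q.2, q.1.2)))

theorem lintegral_sq_lintegral_mul [SFinite μ] [SFinite ν] {φ : β → ℝ≥0∞}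
    (hφ : AEMeasurable φ ν) {P : α → β → ℝ≥0∞} (hP : Measurable (Function.uncurry P)) :
    ∫⁻ x, (∫⁻ t, φ t * P x t ∂ν) ^ 2 ∂μ =
      ∫⁻ t, ∫⁻ s, φ t * φ s * ∫⁻ x, P x t * P x s ∂μ ∂ν ∂ν := by
  have hPx (x : α) : Measurable (P x) := hP.of_uncurry_left
  calc ∫⁻ x, (∫⁻ t, φ t * P x t ∂ν) ^ 2 ∂μ
      = ∫⁻ x, ∫⁻ p, φ p.1 * φ p.2 * (P x p.1 * P x p.2) ∂ν.prod ν ∂μ := by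
        refine lintegral_congr fun x ↦ ?_
        have hφP : AEMeasurable (fun t ↦ φ t * P x t) ν := hφ.mul (hPx x).aemeasurable
        rw [sq, ← lintegral_prod_mul hφP hφP]
        exact lintegral_congr fun p ↦ mul_mul_mul_comm _ _ _ _
    _ = ∫⁻ p, ∫⁻ x, φ p.1 * φ p.2 * (P x p.1 * P x p.2) ∂μ ∂ν.prod ν := by
        refine lintegral_lintegral_swap (AEMeasurable.mul ?_ (Measurable.aemeasurable ?_))
        · exact (hφ.comp_fst.mul hφ.comp_snd).comp_snd
        · exact (hP.comp (by fun_prop : Measurable fun q : α × β × β ↦ (q.1, q.2.1))).mul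
            (hP.comp (by fun_prop : Measurable fun q : α × β × β ↦ (q.1, q.2.2)))
    _ = ∫⁻ p, φ p.1 * φ p.2 * ∫⁻ x, P x p.1 * P x p.2 ∂μ ∂ν.prod ν := by
        refine lintegral_congr fun p ↦ lintegral_const_mul _ ?_
        exact hP.of_uncurry_right.mul hP.of_uncurry_right
    _ = ∫⁻ t, ∫⁻ s, φ t * φ s * ∫⁻ x, P x t * P x s ∂μ ∂ν ∂ν :=
        lintegral_prod _ ((hφ.comp_fst.mul hφ.comp_snd).mul
          (measurable_lintegral_mul hP).aemeasurable)

end Lintegral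

section TotalRelation

variable {α : Type*} [MeasurableSpace α] {μ : Measure α} {R : α → α → Prop}

theorem lintegral_lintegral_le_two_mul [SFinite μ] [Std.Total R]
    (hR : MeasurableSet {p : α × α | R p.1 p.2}) {F : α → α → ℝ≥0∞}
    (hF : AEMeasurable (Function.uncurry F) (μ.prod μ)) (hsymm : ∀ s t, F s t = F t s) :
    ∫⁻ s, ∫⁻ t, F s t ∂μ ∂μ ≤ 2 * ∫⁻ s, ∫⁻ t in {t | R t s}, F s t ∂μ ∂μ := by
  have hsplit (s : α) :
      ∫⁻ t, F s t ∂μ ≤ ∫⁻ t in {t | R t s}, F s t ∂μ + ∫⁻ t in {t | R s t}, F s t ∂μ := by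
    rw [← setLIntegral_univ, ← show {t | R t s} ∪ {t | R s t} = univ from
      eq_univ_of_forall fun t ↦ Std.Total.total t s]
    exact lintegral_union_le _ _ _
  have hswap : ∫⁻ s, ∫⁻ t in {t | R s t}, F s t ∂μ ∂μ =
      ∫⁻ s, ∫⁻ t in {t | R t s}, F s t ∂μ ∂μ := by
    rw [lintegral_setLIntegral_rel_swap hR hF]
    simp_rw [hsymm]
  calc ∫⁻ s, ∫⁻ t, F s t ∂μ ∂μ
      ≤ ∫⁻ s, (∫⁻ t in {t | R t s}, F s t ∂μ + ∫⁻ t in {t | R s t}, F s t ∂μ) ∂μ :=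
        lintegral_mono hsplit
    _ = 2 * ∫⁻ s, ∫⁻ t in {t | R t s}, F s t ∂μ ∂μ := by
        rw [lintegral_add_right' _ (aemeasurable_setLIntegral_rel hR hF), hswap, two_mul]

theorem lintegral_sq_lintegral_mul_le_two_mul {β : Type*} [MeasurableSpace β] {ν : Measure β}
    [SFinite μ] [SFinite ν] [Std.Total R] (hR : MeasurableSet {p : α × α | R p.1 p.2})
    {φ k : α → ℝ≥0∞} (hφ : AEMeasurable φ μ) {P : β → α → ℝ≥0∞}
    (hP : Measurable (Function.uncurry P))
    (hk : ∀ᵐ s ∂μ, ∀ᵐ t ∂μ, ∫⁻ x, P x s * P x t ∂ν ≤ k s) :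
    ∫⁻ x, (∫⁻ t, φ t * P x t ∂μ) ^ 2 ∂ν ≤
      2 * ∫⁻ s, φ s * k s * ∫⁻ t in {t | R t s}, φ t ∂μ ∂μ := by
  have hmeas : AEMeasurable
      (Function.uncurry fun s t ↦ φ s * φ t * ∫⁻ x, P x s * P x t ∂ν) (μ.prod μ) :=
    (hφ.comp_fst.mul hφ.comp_snd).mul (measurable_lintegral_mul hP).aemeasurable
  rw [lintegral_sq_lintegral_mul hφ hP]
  refine (lintegral_lintegral_le_two_mul hR hmeas fun s t ↦ ?_).trans (mul_le_mul_right ?_ _)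
  · simp only [mul_comm]
  refine lintegral_mono_ae ?_
  filter_upwards [hk] with s hs
  rw [← lintegral_const_mul'' _ hφ.restrict]
  refine lintegral_mono_ae ?_
  filter_upwards [ae_restrict_of_ae hs] with t hst
  calc φ s * φ t * ∫⁻ x, P x s * P x t ∂ν ≤ φ s * φ t * k s := mul_le_mul_right hst _
    _ = φ s * k s * φ t := by ring

theorem sq_lintegral_le_two_mul [SFinite μ] [Std.Total R]
    (hR : MeasurableSet {p : α × α | R p.1 p.2}) {h : α → ℝ≥0∞} (hh : AEMeasurable h μ) :
    (∫⁻ s, h s ∂μ) ^ 2 ≤ 2 * ∫⁻ s, h s * ∫⁻ t in {t | R t s}, h t ∂μ ∂μ := by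
  have hmeas : AEMeasurable (Function.uncurry fun s t ↦ h s * h t) (μ.prod μ) :=
    hh.comp_fst.mul hh.comp_snd
  calc (∫⁻ s, h s ∂μ) ^ 2 = ∫⁻ s, ∫⁻ t, h s * h t ∂μ ∂μ := by
        rw [sq, lintegral_lintegral_mul hh hh]
    _ ≤ 2 * ∫⁻ s, ∫⁻ t in {t | R t s}, h s * h t ∂μ ∂μ :=
        lintegral_lintegral_le_two_mul hR hmeas fun s t ↦ mul_comm _ _
    _ = 2 * ∫⁻ s, h s * ∫⁻ t in {t | R t s}, h t ∂μ ∂μ := by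
        simp_rw [lintegral_const_mul'' _ hh.restrict]

theorem lintegral_mul_sq_setLIntegral_le_two_mul [SFinite μ] [Std.Total R]
    (hR : MeasurableSet {p : α × α | R p.1 p.2}) {U h : α → ℝ≥0∞} (hU : AEMeasurable U μ)
    (hh : AEMeasurable h μ) :
    ∫⁻ r, U r * (∫⁻ s in {s | R s r}, h s ∂μ) ^ 2 ∂μ ≤
      2 * ∫⁻ s, h s * (∫⁻ t in {t | R t s}, h t ∂μ) * ∫⁻ r in {r | R s r}, U r ∂μ ∂μ := by
  set G : α → ℝ≥0∞ := fun s ↦ h s * ∫⁻ t in {t | R t s}, h t ∂μ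
  have hGm : AEMeasurable G μ := hh.mul <|
    aemeasurable_setLIntegral_rel (R := fun s r ↦ R r s) (measurable_swap hR) hh.comp_snd
  have hsq (r : α) : (∫⁻ s in {s | R s r}, h s ∂μ) ^ 2 ≤ 2 * ∫⁻ s in {s | R s r}, G s ∂μ := by
    refine (sq_lintegral_le_two_mul hR hh.restrict).trans ?_
    refine mul_le_mul_right (lintegral_mono fun s ↦ mul_le_mul_right ?_ _) _
    exact lintegral_mono' (Measure.restrict_mono_measure Measure.restrict_le_self _) le_rfl
  calc ∫⁻ r, U r * (∫⁻ s in {s | R s r}, h s ∂μ) ^ 2 ∂μ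
      ≤ ∫⁻ r, U r * (2 * ∫⁻ s in {s | R s r}, G s ∂μ) ∂μ :=
        lintegral_mono fun r ↦ mul_le_mul_right (hsq r) _
    _ = 2 * ∫⁻ r, ∫⁻ s in {s | R s r}, G s * U r ∂μ ∂μ := by
        rw [← lintegral_const_mul' _ _ ENNReal.ofNat_ne_top]
        refine lintegral_congr fun r ↦ ?_
        rw [lintegral_mul_const'' _ hGm.restrict]
        ring
    _ = 2 * ∫⁻ s, G s * ∫⁻ r in {r | R s r}, U r ∂μ ∂μ := by
        rw [← lintegral_setLIntegral_rel_swap (F := fun s r ↦ G s * U r) hR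
          (hGm.comp_fst.mul hU.comp_snd)]
        simp_rw [lintegral_const_mul'' _ hU.restrict]

theorem lintegral_mul_sq_setLIntegral_le_of_ne_top [SFinite μ] [Std.Total R]
    (hR : MeasurableSet {p : α × α | R p.1 p.2}) {U K h : α → ℝ≥0∞} {c : ℝ≥0}
    (hU : AEMeasurable U μ) (hK : AEMeasurable K μ) (hh : AEMeasurable h μ)
    (hU' : ∫⁻ x, U x ∂μ ≠ ∞) (hh' : ∫⁻ x, h x ∂μ ≠ ∞)
    (hc : ∀ᵐ s ∂μ, (∫⁻ r in {r | R s r}, U r ∂μ) ^ 2 ≤ c * (U s * K s)) :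
    ∫⁻ r, U r * (∫⁻ s in {s | R s r}, h s ∂μ) ^ 2 ∂μ ≤ 4 * c * ∫⁻ s, K s * h s ^ 2 ∂μ := by
  let H : α → ℝ≥0∞ := fun r ↦ ∫⁻ s in {s | R s r}, h s ∂μ
  have hHm : AEMeasurable H μ :=
    aemeasurable_setLIntegral_rel (R := fun s r ↦ R r s) (measurable_swap hR) hh.comp_snd
  set X := ∫⁻ r, U r * H r ^ 2 ∂μ
  have hX : X ≠ ∞ := by
    refine ne_top_of_le_ne_top (ENNReal.mul_ne_top hU' (ENNReal.pow_ne_top (n := 2) hh')) ?_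
    rw [← lintegral_mul_const'' _ hU]
    exact lintegral_mono fun r ↦ mul_le_mul_right
      (pow_le_pow_left₀ zero_le (setLIntegral_le_lintegral _ _) 2) _
  have hCS : (∫⁻ s, h s * H s * ∫⁻ r in {r | R s r}, U r ∂μ ∂μ) ^ 2 ≤
      (∫⁻ s, c * (K s * h s ^ 2) ∂μ) * X := by
    refine sq_lintegral_le_of_sq_le_mul ((hK.mul (hh.pow_const 2)).const_mul _)
      (hU.mul (hHm.pow_const 2)) ?_
    filter_upwards [hc] with s hs
    calc (h s * H s * ∫⁻ r in {r | R s r}, U r ∂μ) ^ 2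
        = h s ^ 2 * H s ^ 2 * (∫⁻ r in {r | R s r}, U r ∂μ) ^ 2 := by ring
      _ ≤ h s ^ 2 * H s ^ 2 * (c * (U s * K s)) := by gcongr
      _ = c * (K s * h s ^ 2) * (U s * H s ^ 2) := by ring
  rcases eq_or_ne X 0 with hX0 | hX0
  · simp [hX0]
  rw [← ENNReal.mul_le_mul_iff_left hX0 hX]
  calc X * X = X ^ 2 := (sq X).symm
    _ ≤ (2 * ∫⁻ s, h s * H s * ∫⁻ r in {r | R s r}, U r ∂μ ∂μ) ^ 2 :=
        pow_le_pow_left₀ zero_le (lintegral_mul_sq_setLIntegral_le_two_mul hR hU hh) 2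
    _ = 4 * (∫⁻ s, h s * H s * ∫⁻ r in {r | R s r}, U r ∂μ ∂μ) ^ 2 := by ring
    _ ≤ 4 * ((∫⁻ s, c * (K s * h s ^ 2) ∂μ) * X) := by gcongr
    _ = 4 * c * (∫⁻ s, K s * h s ^ 2 ∂μ) * X := by
        rw [lintegral_const_mul' _ _ ENNReal.coe_ne_top]
        ring

theorem exists_monotone_setLIntegral_ne_top [SigmaFinite μ] {f : α → ℝ≥0∞}
    (hf : ∀ᵐ x ∂μ, f x ≠ ∞) :
    ∃ S : ℕ → Set α, Monotone S ∧ ⋃ n, S n = univ ∧ ∀ n, ∫⁻ x in S n, f x ∂μ ≠ ∞ := by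
  have : SigmaFinite (μ.withDensity f) := SigmaFinite.withDensity_of_ne_top hf
  refine ⟨spanningSets (μ.withDensity f), monotone_spanningSets _, iUnion_spanningSets _,
    fun n ↦ ?_⟩
  rw [← withDensity_apply _ (measurableSet_spanningSets _ n)]
  exact (measure_spanningSets_lt_top _ n).ne

theorem tendsto_setLIntegral_of_monotone {S : ℕ → Set α} (hS : Monotone S)
    (hSU : ⋃ n, S n = univ) (f : α → ℝ≥0∞) :
    Tendsto (fun n ↦ ∫⁻ x in S n, f x ∂μ) atTop (nhds (∫⁻ x, f x ∂μ)) := by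
  rw [← setLIntegral_univ, ← hSU, setLIntegral_iUnion_of_directed f hS.directed_le]
  exact tendsto_atTop_iSup fun m n hmn ↦ lintegral_mono_set (hS hmn)

theorem lintegral_mul_sq_setLIntegral_le_of_restrict [SFinite μ]
    (hR : MeasurableSet {p : α × α | R p.1 p.2}) {U h : α → ℝ≥0∞} {B : ℝ≥0∞}
    (hU : AEMeasurable U μ) (hh : AEMeasurable h μ) (hU' : ∀ᵐ x ∂μ, U x ≠ ∞)
    {S : ℕ → Set α} (hS : Monotone S) (hSU : ⋃ n, S n = univ)
    (hB : ∀ n, ∫⁻ r in S n, U r * (∫⁻ s in {s | R s r}, h s ∂μ.restrict (S n)) ^ 2 ∂μ ≤ B) :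
    ∫⁻ r, U r * (∫⁻ s in {s | R s r}, h s ∂μ) ^ 2 ∂μ ≤ B := by
  let H (n : ℕ) (r : α) : ℝ≥0∞ := ∫⁻ s in {s | R s r}, h s ∂μ.restrict (S n)
  have hHm (n : ℕ) : AEMeasurable (H n) μ :=
    aemeasurable_setLIntegral_rel (R := fun s r ↦ R r s) (measurable_swap hR) hh.restrict.comp_snd
  have hHmono (r : α) : Monotone fun n ↦ H n r := fun m n hmn ↦
    lintegral_mono' (Measure.restrict_mono_measure (Measure.restrict_mono_set _ (hS hmn)) _) le_rfl
  have hHlim (r : α) : Tendsto (fun n ↦ H n r) atTop (nhds (∫⁻ s in {s | R s r}, h s ∂μ)) := by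
    have hRr : MeasurableSet {s | R s r} := measurable_prodMk_right hR
    simp_rw [H, Measure.restrict_comm hRr]
    exact tendsto_setLIntegral_of_monotone hS hSU h
  refine le_of_tendsto' (tendsto_setLIntegral_of_monotone hS hSU _) fun m ↦ ?_
  have hlim : Tendsto (fun n ↦ ∫⁻ r in S m, U r * H n r ^ 2 ∂μ) atTop
      (nhds (∫⁻ r in S m, U r * (∫⁻ s in {s | R s r}, h s ∂μ) ^ 2 ∂μ)) := by
    refine lintegral_tendsto_of_tendsto_of_monotone
      (fun n ↦ (hU.mul ((hHm n).pow_const 2)).restrict)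
      (.of_forall fun r m n hmn ↦ mul_le_mul_right (pow_le_pow_left₀ zero_le (hHmono r hmn) 2) _) ?_
    filter_upwards [ae_restrict_of_ae hU'] with r hUr
    exact ENNReal.Tendsto.const_mul (ENNReal.Tendsto.pow (hHlim r)) (.inr hUr)
  refine le_of_tendsto hlim ?_
  filter_upwards [eventually_ge_atTop m] with n hmn
  exact (lintegral_mono_set (hS hmn)).trans (hB n)

/-- The weighted Hardy inequality, in a form that covers the operator `∫₀^r h` and its dual. -/
theorem lintegral_mul_sq_setLIntegral_le [SigmaFinite μ] [Std.Total R]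
    (hR : MeasurableSet {p : α × α | R p.1 p.2}) {U K h : α → ℝ≥0∞} {c : ℝ≥0}
    (hU : AEMeasurable U μ) (hK : AEMeasurable K μ) (hh : AEMeasurable h μ)
    (hU' : ∀ᵐ x ∂μ, U x ≠ ∞) (hh' : ∀ᵐ x ∂μ, h x ≠ ∞)
    (hc : ∀ᵐ s ∂μ, (∫⁻ r in {r | R s r}, U r ∂μ) ^ 2 ≤ c * (U s * K s)) :
    ∫⁻ r, U r * (∫⁻ s in {s | R s r}, h s ∂μ) ^ 2 ∂μ ≤ 4 * c * ∫⁻ s, K s * h s ^ 2 ∂μ := by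
  obtain ⟨S, hS, hSU, hSfin⟩ := exists_monotone_setLIntegral_ne_top (μ := μ)
    (f := fun x ↦ U x + h x) <| by
      filter_upwards [hU', hh'] with x hUx hhx using ENNReal.add_ne_top.2 ⟨hUx, hhx⟩
  refine lintegral_mul_sq_setLIntegral_le_of_restrict hR hU hh hU' hS hSU fun n ↦ ?_
  refine (lintegral_mul_sq_setLIntegral_le_of_ne_top hR hU.restrict hK.restrict hh.restrict
    ?_ ?_ ?_).trans (mul_le_mul_right (setLIntegral_le_lintegral _ _) _)
  · exact ne_top_of_le_ne_top (hSfin n) (lintegral_mono fun _ ↦ le_self_add)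
  · exact ne_top_of_le_ne_top (hSfin n) (lintegral_mono fun _ ↦ le_add_self)
  · filter_upwards [ae_restrict_of_ae hc] with s hs
    exact (pow_le_pow_left₀ zero_le (lintegral_mono' (Measure.restrict_mono_measure
      Measure.restrict_le_self _) le_rfl) 2).trans hs

end TotalRelation

section Interval

theorem restrict_Ioo_restrict_ge {a b s : ℝ} (hs : a ≤ s) :
    (volume.restrict (Ioo a b)).restrict {r | s ≤ r} = volume.restrict (Ioo s b) := by
  calc (volume.restrict (Ioo a b)).restrict (Ici s)
      = (volume.restrict (Ioo a b)).restrict (Ioi s) :=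
        (Measure.restrict_congr_set Ioi_ae_eq_Ici).symm
    _ = volume.restrict (Ioo s b) := by
        rw [Measure.restrict_restrict measurableSet_Ioi, inter_comm, Ioo_inter_Ioi,
          max_eq_right hs]

theorem restrict_Ioo_restrict_le {a b s : ℝ} (hs : s ≤ b) :
    (volume.restrict (Ioo a b)).restrict {r | r ≤ s} = volume.restrict (Ioo a s) := by
  calc (volume.restrict (Ioo a b)).restrict (Iic s)
      = (volume.restrict (Ioo a b)).restrict (Iio s) :=
        (Measure.restrict_congr_set Iio_ae_eq_Iic).symm
    _ = volume.restrict (Ioo a s) := by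
        rw [Measure.restrict_restrict measurableSet_Iio, inter_comm, Ioo_inter_Iio,
          min_eq_right hs]

theorem lintegral_Ioo_Ioo_swap {a b : ℝ} {F : ℝ → ℝ → ℝ≥0∞}
    (hF : AEMeasurable (Function.uncurry F)
      ((volume.restrict (Ioo a b)).prod (volume.restrict (Ioo a b)))) :
    ∫⁻ s in Ioo a b, ∫⁻ t in Ioo s b, F s t = ∫⁻ t in Ioo a b, ∫⁻ s in Ioo a t, F s t := by
  calc ∫⁻ s in Ioo a b, ∫⁻ t in Ioo s b, F s t
      = ∫⁻ s in Ioo a b, ∫⁻ t in {t | s ≤ t}, F s t ∂volume.restrict (Ioo a b) :=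
        setLIntegral_congr_fun measurableSet_Ioo fun s hs ↦ by
          simp only [restrict_Ioo_restrict_ge hs.1.le]
    _ = ∫⁻ t in Ioo a b, ∫⁻ s in {s | s ≤ t}, F s t ∂volume.restrict (Ioo a b) :=
        lintegral_setLIntegral_rel_swap (measurableSet_le measurable_fst measurable_snd) hF
    _ = ∫⁻ t in Ioo a b, ∫⁻ s in Ioo a t, F s t :=
        setLIntegral_congr_fun measurableSet_Ioo fun t ht ↦ by
          simp only [restrict_Ioo_restrict_le ht.2.le]

theorem lintegral_Ioo_ofReal_eq {f : ℝ → ℝ} {a b : ℝ} (hab : a ≤ b)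
    (hf : ContinuousOn f (Icc a b)) (hf0 : ∀ x ∈ Icc a b, 0 ≤ f x) :
    ∫⁻ x in Ioo a b, ENNReal.ofReal (f x) = ENNReal.ofReal (∫ x in a..b, f x) := by
  rw [intervalIntegral.integral_of_le hab, integral_Ioc_eq_integral_Ioo,
    ofReal_integral_eq_lintegral_ofReal (hf.integrableOn_Icc.mono_set Ioo_subset_Icc_self)
      (ae_restrict_of_forall_mem measurableSet_Ioo fun x hx ↦ hf0 x (Ioo_subset_Icc_self hx))]

theorem ofReal_mul_sub_le_lintegral_Ioo {f : ℝ → ℝ} {a b c : ℝ} (hc : 0 ≤ c)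
    (hf : ∀ x ∈ Ioo a b, c ≤ f x) :
    ENNReal.ofReal (c * (b - a)) ≤ ∫⁻ x in Ioo a b, ENNReal.ofReal (f x) := by
  rw [ENNReal.ofReal_mul hc, ← Real.volume_Ioo, ← setLIntegral_const]
  exact setLIntegral_mono' measurableSet_Ioo fun x hx ↦ ENNReal.ofReal_le_ofReal (hf x hx)

theorem lintegral_Ioo_le_ofReal_mul_sub {f : ℝ → ℝ} {a b c : ℝ} (hc : 0 ≤ c)
    (hf : ∀ x ∈ Ioo a b, f x ≤ c) :
    ∫⁻ x in Ioo a b, ENNReal.ofReal (f x) ≤ ENNReal.ofReal (c * (b - a)) := by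
  rw [ENNReal.ofReal_mul hc, ← Real.volume_Ioo, ← setLIntegral_const]
  exact setLIntegral_mono' measurableSet_Ioo fun x hx ↦ ENNReal.ofReal_le_ofReal (hf x hx)

theorem lintegral_Ioo_le_add (f : ℝ → ℝ≥0∞) (a m b : ℝ) :
    ∫⁻ x in Ioo a b, f x ≤ (∫⁻ x in Ioo a m, f x) + ∫⁻ x in Ioo m b, f x := by
  rw [setLIntegral_congr (μ := volume) (Ioo_ae_eq_Ioc (a := a) (b := m))]
  refine (lintegral_mono_set fun x hx ↦ ?_).trans (lintegral_union_le _ _ _)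
  exact (le_or_gt x m).imp (fun h ↦ ⟨hx.1, h⟩) fun h ↦ ⟨h, hx.2⟩

theorem lintegral_mul_sq_lintegral_Ioo_left_le {a b : ℝ} {U K h : ℝ → ℝ≥0∞} {c : ℝ≥0}
    (hU : AEMeasurable U (volume.restrict (Ioo a b)))
    (hK : AEMeasurable K (volume.restrict (Ioo a b)))
    (hh : AEMeasurable h (volume.restrict (Ioo a b)))
    (hU' : ∀ᵐ x ∂volume.restrict (Ioo a b), U x ≠ ∞)
    (hh' : ∀ᵐ x ∂volume.restrict (Ioo a b), h x ≠ ∞)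
    (hc : ∀ s ∈ Ioo a b, (∫⁻ r in Ioo s b, U r) ^ 2 ≤ c * (U s * K s)) :
    ∫⁻ r in Ioo a b, U r * (∫⁻ s in Ioo a r, h s) ^ 2 ≤
      4 * c * ∫⁻ s in Ioo a b, K s * h s ^ 2 := by
  refine le_trans (le_of_eq ?_) (lintegral_mul_sq_setLIntegral_le (R := (· ≤ ·))
    (measurableSet_le measurable_fst measurable_snd) hU hK hh hU' hh' ?_)
  · exact setLIntegral_congr_fun measurableSet_Ioo fun r hr ↦ by
      simp only [restrict_Ioo_restrict_le hr.2.le]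
  · filter_upwards [ae_restrict_mem measurableSet_Ioo] with s hs
    simpa only [restrict_Ioo_restrict_ge hs.1.le] using hc s hs

theorem lintegral_mul_sq_lintegral_Ioo_right_le {a b : ℝ} {U K h : ℝ → ℝ≥0∞} {c : ℝ≥0}
    (hU : AEMeasurable U (volume.restrict (Ioo a b)))
    (hK : AEMeasurable K (volume.restrict (Ioo a b)))
    (hh : AEMeasurable h (volume.restrict (Ioo a b)))
    (hU' : ∀ᵐ x ∂volume.restrict (Ioo a b), U x ≠ ∞)
    (hh' : ∀ᵐ x ∂volume.restrict (Ioo a b), h x ≠ ∞)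
    (hc : ∀ s ∈ Ioo a b, (∫⁻ r in Ioo a s, U r) ^ 2 ≤ c * (U s * K s)) :
    ∫⁻ r in Ioo a b, U r * (∫⁻ s in Ioo r b, h s) ^ 2 ≤
      4 * c * ∫⁻ s in Ioo a b, K s * h s ^ 2 := by
  refine le_trans (le_of_eq ?_) (lintegral_mul_sq_setLIntegral_le (R := (· ≥ ·))
    (measurableSet_le measurable_snd measurable_fst) hU hK hh hU' hh' ?_)
  · exact setLIntegral_congr_fun measurableSet_Ioo fun r hr ↦ by
      simp only [ge_iff_le, restrict_Ioo_restrict_ge hr.1.le]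
  · filter_upwards [ae_restrict_mem measurableSet_Ioo] with s hs
    simpa only [ge_iff_le, restrict_Ioo_restrict_le hs.2.le] using hc s hs

end Interval

section Disc

theorem lintegral_ball_eq_lintegral_circleMap {F : ℂ → ℝ≥0∞} (hF : Measurable F) (R : ℝ) :
    ∫⁻ z in Metric.ball 0 R, F z =
      ∫⁻ r in Ioo 0 R, ENNReal.ofReal r * ∫⁻ θ in Ioo (-π) π, F (circleMap 0 r θ) := by
  have hsymm (p : ℝ × ℝ) : Complex.polarCoord.symm p = circleMap 0 p.1 p.2 := by
    simp [circleMap, Complex.polarCoord_symm_apply, Complex.exp_mul_I]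
  have hcirc : Measurable fun p : ℝ × ℝ ↦ circleMap 0 p.1 p.2 := by
    unfold circleMap
    fun_prop
  have hind (r : ℝ) (hr : r ∈ Ioi (0 : ℝ)) :
      ∫⁻ θ in Ioo (-π) π, ENNReal.ofReal r * (Metric.ball 0 R).indicator F (circleMap 0 r θ) =
        (Iio R).indicator
          (fun r ↦ ENNReal.ofReal r * ∫⁻ θ in Ioo (-π) π, F (circleMap 0 r θ)) r := by
    have hmem (θ : ℝ) : circleMap 0 r θ ∈ Metric.ball (0 : ℂ) R ↔ r ∈ Iio R := by
      rw [mem_ball_zero_iff, norm_circleMap_zero, abs_of_pos hr, mem_Iio]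
    by_cases hrR : r ∈ Iio R <;>
      simp [indicator, hmem, hrR, lintegral_const_mul' _ _ ENNReal.ofReal_ne_top]
  have hmeas : Measurable fun p : ℝ × ℝ ↦ ENNReal.ofReal p.1 *
      (Metric.ball 0 R).indicator F (circleMap 0 p.1 p.2) :=
    (ENNReal.measurable_ofReal.comp measurable_fst).mul
      ((hF.indicator measurableSet_ball).comp hcirc)
  rw [← lintegral_indicator measurableSet_ball, ← Complex.lintegral_comp_polarCoord_symm]
  simp only [hsymm, smul_eq_mul]
  rw [polarCoord_target, Measure.volume_eq_prod, ← Measure.prod_restrict,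
    lintegral_prod _ hmeas.aemeasurable, setLIntegral_congr_fun measurableSet_Ioi hind,
    setLIntegral_indicator measurableSet_Iio, inter_comm, Ioi_inter_Iio]

theorem norm_one_sub_ofReal_mul (ρ : ℝ) {z : ℂ} (hz : ‖z‖ = 1) : ‖1 - ρ * z‖ = ‖z - ρ‖ := by
  have hconj : (starRingEnd ℂ) z * z = 1 := by
    rw [Complex.conj_mul', hz]
    norm_num
  calc ‖1 - ρ * z‖ = ‖(starRingEnd ℂ) (1 - ρ * z)‖ := (RCLike.norm_conj _).symm
    _ = ‖(starRingEnd ℂ) z * (z - ρ)‖ := by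
        rw [map_sub, map_mul, Complex.conj_ofReal, map_one, mul_sub, hconj, mul_comm (ρ : ℂ)]
    _ = ‖z - ρ‖ := by rw [norm_mul, RCLike.norm_conj, hz, one_mul]

theorem integral_one_div_norm_one_sub_sq {ρ : ℝ} (hρ : |ρ| < 1) :
    ∫ θ in (-π)..π, 1 / ‖1 - ρ * circleMap 0 1 θ‖ ^ 2 = 2 * π / (1 - ρ ^ 2) := by
  have hper : Function.Periodic (fun θ ↦ 1 / ‖1 - ρ * circleMap 0 1 θ‖ ^ 2) (2 * π) := fun θ ↦ by
    simp only [periodic_circleMap 0 1 θ]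
  have hpoisson : (2 * π)⁻¹ * ((1 - ρ ^ 2) * ∫ θ in (0)..(2 * π),
      1 / ‖1 - ρ * circleMap 0 1 θ‖ ^ 2) = 1 := by
    have haverage := InnerProductSpace.HarmonicOnNhd.circleAverage_poissonKernel_smul (c := 0)
      (R := 1) (InnerProductSpace.harmonicOnNhd_const (1 : ℝ)) (w := (ρ : ℂ)) (by simpa using hρ)
    rw [circleAverage, smul_eq_mul] at haverage
    rw [← intervalIntegral.integral_const_mul]
    refine Eq.trans (congrArg _ (intervalIntegral.integral_congr fun θ _ ↦ ?_)) haverage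
    rw [norm_one_sub_ofReal_mul ρ (by simp)]
    simp [poissonKernel_def, div_eq_mul_inv]
  have hρ' : 0 < 1 - ρ ^ 2 := by
    rw [sub_pos, sq_lt_one_iff_abs_lt_one]
    exact hρ
  have hshift := hper.intervalIntegral_add_eq (-π) 0
  rw [zero_add, show -π + 2 * π = π by ring] at hshift
  rw [hshift]
  field_simp at hpoisson ⊢
  linarith

theorem lintegral_ofReal_one_div_norm_one_sub_sq {ρ : ℝ} (hρ : |ρ| < 1) :
    ∫⁻ θ in Ioo (-π) π, ENNReal.ofReal (1 / ‖1 - ρ * circleMap 0 1 θ‖ ^ 2) =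
      ENNReal.ofReal (2 * π / (1 - ρ ^ 2)) := by
  have hne (θ : ℝ) : ‖1 - ρ * circleMap 0 1 θ‖ ^ 2 ≠ 0 := by
    have hnorm : ‖ρ * circleMap 0 1 θ‖ < 1 := by simpa using hρ
    refine pow_ne_zero 2 (norm_ne_zero_iff.2 (sub_ne_zero.2 fun h ↦ ?_))
    rw [← h, norm_one] at hnorm
    exact lt_irrefl 1 hnorm
  have hcont : Continuous fun θ ↦ 1 / ‖1 - ρ * circleMap 0 1 θ‖ ^ 2 :=
    continuous_const.div (by fun_prop) hne
  rw [← integral_one_div_norm_one_sub_sq hρ, lintegral_Ioo_ofReal_eq (by linarith [pi_pos])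
    hcont.continuousOn fun θ _ ↦ by positivity]

theorem norm_intervalIntegral_le_integral_semicircle {G : ℂ → ℂ} {R ρ : ℝ}
    (hG : DifferentiableOn ℂ G (Metric.ball 0 R)) (hρ : 0 ≤ ρ) (hρR : ρ < R) :
    ‖∫ t in (-ρ)..ρ, G t‖ ≤ ρ * ∫ θ in (0)..π, ‖G (circleMap 0 ρ θ)‖ := by
  obtain ⟨F, hF⟩ := hG.isExactOn_ball
  have hcircle (θ : ℝ) : circleMap 0 ρ θ ∈ Metric.ball (0 : ℂ) R := by
    rwa [mem_ball_zero_iff, norm_circleMap_zero, abs_of_nonneg hρ]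
  have hreal (t : ℝ) (ht : t ∈ uIcc (-ρ) ρ) : (t : ℂ) ∈ Metric.ball (0 : ℂ) R := by
    rw [uIcc_of_le (by linarith)] at ht
    rw [mem_ball_zero_iff, Complex.norm_real]
    exact (abs_le.2 ht).trans_lt hρR
  have hdiameter : ∫ t in (-ρ)..ρ, G t = F ρ - F (-ρ) := by
    rw [intervalIntegral.integral_eq_sub_of_hasDerivAt
      (fun t ht ↦ (hF t (hreal t ht)).comp_ofReal), Complex.ofReal_neg]
    exact (hG.continuousOn.comp Complex.continuous_ofReal.continuousOn hreal).intervalIntegrable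
  have harc : ∫ θ in (0)..π, G (circleMap 0 ρ θ) * (circleMap 0 ρ θ * Complex.I) =
      F (-ρ) - F ρ := by
    rw [intervalIntegral.integral_eq_sub_of_hasDerivAt
      fun θ _ ↦ (hF _ (hcircle θ)).comp θ (hasDerivAt_circleMap 0 ρ θ)]
    · simp [circleMap]
    · exact ((hG.continuousOn.comp_continuous (continuous_circleMap 0 ρ) hcircle).mul
        ((continuous_circleMap 0 ρ).mul continuous_const)).intervalIntegrable _ _
  calc ‖∫ t in (-ρ)..ρ, G t‖
      = ‖∫ θ in (0)..π, G (circleMap 0 ρ θ) * (circleMap 0 ρ θ * Complex.I)‖ := by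
        rw [hdiameter, harc, norm_sub_rev]
    _ ≤ ∫ θ in (0)..π, ‖G (circleMap 0 ρ θ) * (circleMap 0 ρ θ * Complex.I)‖ :=
        intervalIntegral.norm_integral_le_integral_norm pi_pos.le
    _ = ρ * ∫ θ in (0)..π, ‖G (circleMap 0 ρ θ)‖ := by
        simp [abs_of_nonneg hρ, mul_comm ρ]

/-- The Fejér–Riesz inequality: apply the semicircle bound to `g(z) * conj (g (conj z))`, which is
`|g|²` on the real axis. -/
theorem integral_diameter_sq_le {g : ℂ → ℂ} {R ρ : ℝ}
    (hg : DifferentiableOn ℂ g (Metric.ball 0 R)) (hρ : 0 ≤ ρ) (hρR : ρ < R) :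
    ∫ t in (-ρ)..ρ, ‖g t‖ ^ 2 ≤ ρ / 2 * ∫ θ in (-π)..π, ‖g (circleMap 0 ρ θ)‖ ^ 2 := by
  let G (z : ℂ) : ℂ := g z * (starRingEnd ℂ) (g ((starRingEnd ℂ) z))
  let c (θ : ℝ) : ℝ := ‖g (circleMap 0 ρ θ)‖
  have hG : DifferentiableOn ℂ G (Metric.ball 0 R) := fun z hz ↦ by
    have hz' : (starRingEnd ℂ) z ∈ Metric.ball (0 : ℂ) R := by simpa using hz
    have hstar := (hg.differentiableAt (Metric.isOpen_ball.mem_nhds hz')).conj_conj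
    rw [Complex.conj_conj] at hstar
    exact ((hg.differentiableAt (Metric.isOpen_ball.mem_nhds hz)).mul hstar).differentiableWithinAt
  have hGreal (t : ℝ) : G t = ((‖g t‖ ^ 2 : ℝ) : ℂ) := by
    simp only [G, Complex.conj_ofReal, Complex.mul_conj, Complex.normSq_eq_norm_sq]
  have hGcircle (θ : ℝ) : ‖G (circleMap 0 ρ θ)‖ = c θ * c (-θ) := by
    simp [G, c, circleMap, ← Complex.exp_conj]
  have hc : Continuous c := (hg.continuousOn.comp_continuous (continuous_circleMap 0 ρ) fun θ ↦ by
    rwa [mem_ball_zero_iff, norm_circleMap_zero, abs_of_nonneg hρ]).norm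
  have hcint (f : ℝ → ℝ) (hf : Continuous f) (a b : ℝ) : IntervalIntegrable f volume a b :=
    hf.intervalIntegrable a b
  calc ∫ t in (-ρ)..ρ, ‖g t‖ ^ 2 = ‖∫ t in (-ρ)..ρ, G t‖ := by
        simp_rw [hGreal]
        rw [intervalIntegral.integral_ofReal, Complex.norm_real, Real.norm_of_nonneg]
        exact intervalIntegral.integral_nonneg (by linarith) fun t _ ↦ by positivity
    _ ≤ ρ * ∫ θ in (0)..π, c θ * c (-θ) := by
        simpa only [hGcircle] using norm_intervalIntegral_le_integral_semicircle hG hρ hρR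
    _ ≤ ρ * ∫ θ in (0)..π, (c θ ^ 2 + c (-θ) ^ 2) / 2 := by
        gcongr
        refine intervalIntegral.integral_mono pi_pos.le (hcint _ (by fun_prop) _ _)
          (hcint _ (by fun_prop) _ _) fun θ ↦ ?_
        linarith [two_mul_le_add_sq (c θ) (c (-θ))]
    _ = ρ / 2 * ∫ θ in (-π)..π, c θ ^ 2 := by
        rw [intervalIntegral.integral_div, intervalIntegral.integral_add
          (hcint _ (by fun_prop) _ _) (hcint _ (by fun_prop) _ _),
          intervalIntegral.integral_comp_neg fun θ ↦ c θ ^ 2, neg_zero, add_comm,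
          intervalIntegral.integral_add_adjacent_intervals
          (hcint _ (by fun_prop) _ _) (hcint _ (by fun_prop) _ _)]
        ring

theorem lintegral_radius_sq_le {g : ℂ → ℂ} {R ρ : ℝ}
    (hg : DifferentiableOn ℂ g (Metric.ball 0 R)) (hρ : 0 ≤ ρ) (hρR : ρ < R) :
    ∫⁻ t in Ioo 0 ρ, ‖g t‖ₑ ^ 2 ≤
      ENNReal.ofReal ρ * ∫⁻ θ in Ioo (-π) π, ‖g (circleMap 0 ρ θ)‖ₑ ^ 2 := by
  have henorm (z : ℂ) : ‖z‖ₑ ^ 2 = ENNReal.ofReal (‖z‖ ^ 2) := by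
    rw [ENNReal.ofReal_pow (norm_nonneg z), ofReal_norm]
  have hdiameter : ContinuousOn (fun t : ℝ ↦ ‖g t‖ ^ 2) (Icc (-ρ) ρ) := by
    refine ((hg.continuousOn.comp Complex.continuous_ofReal.continuousOn fun t ht ↦ ?_).norm).pow 2
    rw [mem_ball_zero_iff, Complex.norm_real]
    exact (abs_le.2 ht).trans_lt hρR
  have hcircle : Continuous fun θ ↦ ‖g (circleMap 0 ρ θ)‖ ^ 2 :=
    (hg.continuousOn.comp_continuous (continuous_circleMap 0 ρ) fun θ ↦ by
      rwa [mem_ball_zero_iff, norm_circleMap_zero, abs_of_nonneg hρ]).norm.pow 2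
  simp_rw [henorm]
  calc ∫⁻ t in Ioo 0 ρ, ENNReal.ofReal (‖g t‖ ^ 2)
      ≤ ∫⁻ t in Ioo (-ρ) ρ, ENNReal.ofReal (‖g t‖ ^ 2) :=
        lintegral_mono_set (Ioo_subset_Ioo_left (by linarith))
    _ = ENNReal.ofReal (∫ t in (-ρ)..ρ, ‖g t‖ ^ 2) :=
        lintegral_Ioo_ofReal_eq (by linarith) hdiameter fun t _ ↦ by positivity
    _ ≤ ENNReal.ofReal (ρ * ∫ θ in (-π)..π, ‖g (circleMap 0 ρ θ)‖ ^ 2) := by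
        refine ENNReal.ofReal_le_ofReal ((integral_diameter_sq_le hg hρ hρR).trans ?_)
        have h_int := intervalIntegral.integral_nonneg (μ := volume)
          (f := fun θ ↦ ‖g (circleMap 0 ρ θ)‖ ^ 2)
          (by linarith [pi_pos] : -π ≤ π) fun θ _ ↦ by positivity
        exact mul_le_mul_of_nonneg_right (by linarith) h_int
    _ = _ := by
        rw [ENNReal.ofReal_mul hρ, lintegral_Ioo_ofReal_eq (by linarith [pi_pos])
          hcircle.continuousOn fun θ _ ↦ by positivity]

/-- The measure `v(|z|) dx dy` on the unit disc, without the normalisation of area by `π`. -/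
def discMeasure (v : ℝ → ℝ) : Measure ℂ :=
  (volume.restrict (Metric.ball 0 1)).withDensity fun z ↦ ENNReal.ofReal (v ‖z‖)

instance (v : ℝ → ℝ) : SFinite (discMeasure v) := by
  unfold discMeasure
  infer_instance

theorem lintegral_discMeasure {v : ℝ → ℝ} (hv : Measurable v) {F : ℂ → ℝ≥0∞} (hF : Measurable F) :
    ∫⁻ z, F z ∂discMeasure v = ∫⁻ r in Ioo 0 1,
      ENNReal.ofReal (v r) * (ENNReal.ofReal r * ∫⁻ θ in Ioo (-π) π, F (circleMap 0 r θ)) := by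
  have hvm : Measurable fun z : ℂ ↦ ENNReal.ofReal (v ‖z‖) := by fun_prop
  rw [discMeasure, lintegral_withDensity_eq_lintegral_mul _ hvm hF]
  rw [lintegral_ball_eq_lintegral_circleMap (hvm.mul hF)]
  refine setLIntegral_congr_fun measurableSet_Ioo fun r hr ↦ ?_
  simp only [Pi.mul_apply, norm_circleMap_zero, abs_of_pos hr.1]
  rw [lintegral_const_mul' _ _ ENNReal.ofReal_ne_top]
  ring

theorem DvSq_eq {v : ℝ → ℝ} (hv : Measurable v) (f : ℂ → ℂ) :
    DvSq v f =
      ‖f 0‖ₑ ^ 2 + (ENNReal.ofReal π)⁻¹ * ∫⁻ z, ‖deriv f z‖ₑ ^ 2 ∂discMeasure v := by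
  have hvm : Measurable fun z : ℂ ↦ ENNReal.ofReal (v ‖z‖) := by fun_prop
  rw [DvSq, discMeasure, lintegral_withDensity_eq_lintegral_mul _ hvm (by fun_prop)]
  simp only [Pi.mul_apply, mul_comm, enorm_eq_nnnorm]

end Disc

theorem le_mul_ofReal_of_mul_le {X Y B : ℝ≥0∞} {y : ℝ} (hy : 0 < y)
    (hY : ENNReal.ofReal y⁻¹ ≤ Y) (h : X * Y ≤ B) : X ≤ B * ENNReal.ofReal y := by
  rw [ENNReal.ofReal_inv_of_pos hy] at hY
  have hX := (mul_le_mul_right hY X).trans h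
  rwa [← div_eq_mul_inv, ENNReal.div_le_iff (by simpa using hy) ENNReal.ofReal_ne_top] at hX

section ByParts

theorem lintegral_mul_ofReal_eq_of_hasDerivAt {G g : ℝ → ℝ} {a b : ℝ} {w : ℝ → ℝ≥0∞}
    (hG : ∀ x ∈ Ico a b, HasDerivAt G (g x) x) (hg : ContinuousOn g (Ico a b))
    (hg0 : ∀ x ∈ Ico a b, 0 ≤ g x) (hGa : 0 ≤ G a)
    (hw : AEMeasurable w (volume.restrict (Ioo a b))) :
    ∫⁻ r in Ioo a b, w r * ENNReal.ofReal (G r) =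
      ENNReal.ofReal (G a) * (∫⁻ r in Ioo a b, w r) +
        ∫⁻ s in Ioo a b, ENNReal.ofReal (g s) * ∫⁻ r in Ioo s b, w r := by
  have hgm : AEMeasurable (fun s ↦ ENNReal.ofReal (g s)) (volume.restrict (Ioo a b)) :=
    ((hg.mono Ioo_subset_Ico_self).aemeasurable measurableSet_Ioo).ennreal_ofReal
  have hFTC (r : ℝ) (hr : r ∈ Ioo a b) :
      w r * ENNReal.ofReal (G r) =
        ENNReal.ofReal (G a) * w r + ∫⁻ s in Ioo a r, ENNReal.ofReal (g s) * w r := by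
    have hsub : Icc a r ⊆ Ico a b := Icc_subset_Ico_right hr.2
    have h_int : ∫ s in a..r, g s = G r - G a :=
      intervalIntegral.integral_eq_sub_of_hasDerivAt
        (fun x hx ↦ hG x (hsub (uIcc_of_le hr.1.le ▸ hx)))
        ((hg.mono hsub).intervalIntegrable_of_Icc hr.1.le)
    have hint0 : 0 ≤ ∫ s in a..r, g s :=
      intervalIntegral.integral_nonneg hr.1.le fun s hs ↦ hg0 s (hsub hs)
    rw [lintegral_mul_const'' _ (hgm.mono_set (Ioo_subset_Ioo_right hr.2.le)),
      lintegral_Ioo_ofReal_eq hr.1.le (hg.mono hsub)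
        fun s hs ↦ hg0 s (hsub hs), ← add_mul,
      ← ENNReal.ofReal_add hGa hint0, h_int, add_sub_cancel, mul_comm]
  have hswap := lintegral_Ioo_Ioo_swap (F := fun s r ↦ ENNReal.ofReal (g s) * w r)
    (hgm.comp_fst.mul hw.comp_snd)
  rw [setLIntegral_congr_fun measurableSet_Ioo hFTC, lintegral_add_left' (hw.const_mul _),
    lintegral_const_mul'' _ hw, ← hswap]
  simp_rw [lintegral_const_mul' _ _ ENNReal.ofReal_ne_top]

theorem lintegral_mul_ofReal_one_div_one_sub_pow {a b : ℝ} (n : ℕ) (ha : a < 1) (hb : b ≤ 1)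
    {w : ℝ → ℝ≥0∞} (hw : AEMeasurable w (volume.restrict (Ioo a b))) :
    ∫⁻ r in Ioo a b, w r * ENNReal.ofReal (1 / (1 - r) ^ n) =
      ENNReal.ofReal (1 / (1 - a) ^ n) * (∫⁻ r in Ioo a b, w r) +
        n * ∫⁻ s in Ioo a b, ENNReal.ofReal (1 / (1 - s) ^ (n + 1)) * ∫⁻ r in Ioo s b, w r := by
  have hne {x : ℝ} (hx : x ∈ Ico a b) : 0 < 1 - x := sub_pos.2 (hx.2.trans_le hb)
  have hderiv (x : ℝ) (hx : x ∈ Ico a b) :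
      HasDerivAt (fun x : ℝ ↦ 1 / (1 - x) ^ n) (n * (1 / (1 - x) ^ (n + 1))) x := by
    have hpow := (hasDerivAt_zpow (-n : ℤ) (1 - x) (.inl (hne hx).ne')).scomp x
      ((hasDerivAt_id x).const_sub 1)
    simp only [one_div, ← zpow_natCast, ← zpow_neg]
    refine hpow.congr_deriv ?_
    push_cast
    rw [neg_add']
    simp
  have hcont : ContinuousOn (fun x : ℝ ↦ n * (1 / (1 - x) ^ (n + 1))) (Ico a b) :=
    continuousOn_const.mul (continuousOn_const.div (by fun_prop) fun x hx ↦
      (pow_pos (hne hx) _).ne')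
  rw [lintegral_mul_ofReal_eq_of_hasDerivAt hderiv hcont (fun x hx ↦ by have := hne hx; positivity)
    (by have := sub_pos.2 ha; positivity) hw, ← lintegral_const_mul' (n : ℝ≥0∞) _ (by simp)]
  simp_rw [ENNReal.ofReal_mul (Nat.cast_nonneg n), ENNReal.ofReal_natCast, mul_assoc]

end ByParts

namespace RadialWeight

variable {v : ℝ → ℝ}

theorem intervalIntegrable (hv : RadialWeight v) {a b : ℝ} (ha : 0 ≤ a) (hab : a ≤ b)
    (hb : b ≤ 1) : IntervalIntegrable v volume a b :=
  (intervalIntegrable_iff_integrableOn_Ioo_of_le hab).2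
    (hv.2.2.mono_set (Ioo_subset_Ioo ha hb))

theorem ofReal_hatw (hv : RadialWeight v) {t : ℝ} (ht : t ∈ Ico 0 1) :
    ENNReal.ofReal (hatw v t) = ∫⁻ r in Ioo t 1, ENNReal.ofReal (v r) := by
  rw [hatw, intervalIntegral.integral_of_le ht.2.le, integral_Ioc_eq_integral_Ioo,
    ofReal_integral_eq_lintegral_ofReal (hv.2.2.mono_set (Ioo_subset_Ioo_left ht.1))]
  filter_upwards [ae_restrict_mem measurableSet_Ioo] with r hr
  exact (hv.2.1 r ⟨ht.1.trans hr.1.le, hr.2⟩).le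

theorem hatw_pos (hv : RadialWeight v) {t : ℝ} (ht : t ∈ Ico 0 1) : 0 < hatw v t :=
  intervalIntegral.intervalIntegral_pos_of_pos_on (hv.intervalIntegrable ht.1 ht.2.le le_rfl)
    (fun r hr ↦ hv.2.1 r ⟨ht.1.trans hr.1.le, hr.2⟩) ht.2

theorem antitoneOn_hatw (hv : RadialWeight v) : AntitoneOn (hatw v) (Ico 0 1) :=
  fun s hs t ht hst ↦ (ENNReal.ofReal_le_ofReal_iff (hv.hatw_pos hs).le).1 <| by
    rw [hv.ofReal_hatw hs, hv.ofReal_hatw ht]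
    exact lintegral_mono_set (Ioo_subset_Ioo_left hst)

theorem aemeasurable_hatw (hv : RadialWeight v) :
    AEMeasurable (hatw v) (volume.restrict (Ioo 0 1)) :=
  aemeasurable_restrict_of_antitoneOn measurableSet_Ioo
    (hv.antitoneOn_hatw.mono Ioo_subset_Ico_self)

theorem lintegral_mul_lintegral_le_M1v_sq (v : ℝ → ℝ) {r : ℝ} (hr : r ∈ Ioo 0 1) :
    (∫⁻ s in Ioo r 1, ENNReal.ofReal (hatw v s / (1 - s) ^ 2)) *
      (∫⁻ s in Ioo 0 r, ENNReal.ofReal (1 / hatw v s)) ≤ M1v v ^ 2 := by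
  have hle := pow_le_pow_left₀ zero_le (le_iSup₂ (f := fun r (_ : r ∈ Ioo (0 : ℝ) 1) ↦
    (∫⁻ s in Ioo r 1, ENNReal.ofReal (hatw v s / (1 - s) ^ 2)) ^ (1 / 2 : ℝ) *
      (∫⁻ s in Ioo 0 r, ENNReal.ofReal (1 / hatw v s)) ^ (1 / 2 : ℝ)) r hr) 2
  rwa [← ENNReal.mul_rpow_of_nonneg _ _ (by norm_num), rpow_half_sq] at hle

theorem lintegral_mul_lintegral_le_M2v_sq (v : ℝ → ℝ) {r : ℝ} (hr : r ∈ Ioo 0 1) :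
    (∫⁻ s in Ioo 0 r, ENNReal.ofReal (hatw v s / (1 - s) ^ 4)) *
      (∫⁻ s in Ioo r 1, ENNReal.ofReal ((1 - s) ^ 2 / hatw v s)) ≤ M2v v ^ 2 := by
  have hle := pow_le_pow_left₀ zero_le (le_iSup₂ (f := fun r (_ : r ∈ Ioo (0 : ℝ) 1) ↦
    (∫⁻ s in Ioo 0 r, ENNReal.ofReal (hatw v s / (1 - s) ^ 4)) ^ (1 / 2 : ℝ) *
      (∫⁻ s in Ioo r 1, ENNReal.ofReal ((1 - s) ^ 2 / hatw v s)) ^ (1 / 2 : ℝ)) r hr) 2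
  rwa [← ENNReal.mul_rpow_of_nonneg _ _ (by norm_num), rpow_half_sq] at hle

theorem lintegral_hatw_div_sq_le_of_half_le (hv : RadialWeight v) {D : ℝ} (hD0 : 0 < D)
    (hD : ∀ r ∈ Ico (0 : ℝ) 1, hatw v r ≤ D * hatw v ((1 + r) / 2)) {r : ℝ}
    (hr : r ∈ Ico (1 / 2) 1) :
    ∫⁻ s in Ioo r 1, ENNReal.ofReal (hatw v s / (1 - s) ^ 2) ≤
      M1v v ^ 2 * ENNReal.ofReal (D * hatw v r / (1 - r)) := by
  obtain ⟨hr0, hr1⟩ : 1 / 2 ≤ r ∧ r < 1 := hr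
  have hVr : 0 < hatw v r := hv.hatw_pos ⟨by linarith, hr1⟩
  have hdoubling : hatw v (2 * r - 1) ≤ D * hatw v r := by
    convert hD (2 * r - 1) ⟨by linarith, by linarith⟩ using 3
    ring
  have hlower (s : ℝ) (hs : s ∈ Ioo (2 * r - 1) r) : 1 / (D * hatw v r) ≤ 1 / hatw v s := by
    have hs' : s ∈ Ico 0 1 := ⟨by linarith [hs.1], hs.2.trans hr1⟩
    exact one_div_le_one_div_of_le (hv.hatw_pos hs')
      ((hv.antitoneOn_hatw ⟨by linarith, by linarith⟩ hs' hs.1.le).trans hdoubling)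
  have hdual : ENNReal.ofReal (D * hatw v r / (1 - r))⁻¹ ≤
      ∫⁻ s in Ioo 0 r, ENNReal.ofReal (1 / hatw v s) := by
    refine le_trans (ENNReal.ofReal_le_ofReal (le_of_eq ?_))
      ((ofReal_mul_sub_le_lintegral_Ioo (by positivity) hlower).trans
        (lintegral_mono_set (Ioo_subset_Ioo_left (by linarith))))
    rw [inv_div]
    ring
  exact le_mul_ofReal_of_mul_le (div_pos (by positivity) (sub_pos.2 hr1)) hdual
    (lintegral_mul_lintegral_le_M1v_sq v ⟨by linarith, hr1⟩)

theorem lintegral_hatw_div_sq_Ioo_half_le (hv : RadialWeight v) {r : ℝ} (hr : r ∈ Ico 0 (1 / 2)) :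
    ∫⁻ s in Ioo r (1 / 2), ENNReal.ofReal (hatw v s / (1 - s) ^ 2) ≤
      2 * ENNReal.ofReal (hatw v r / (1 - r)) := by
  have hr' : r ∈ Ico 0 1 := ⟨hr.1, by linarith [hr.2]⟩
  have hVr : 0 < hatw v r := hv.hatw_pos hr'
  have hupper (s : ℝ) (hs : s ∈ Ioo r (1 / 2)) :
      hatw v s / (1 - s) ^ 2 ≤ hatw v r / (1 / 2) ^ 2 := by
    have hVs := hv.antitoneOn_hatw hr' ⟨hr'.1.trans hs.1.le, by linarith [hs.2]⟩ hs.1.le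
    gcongr
    linarith [hs.2]
  refine (lintegral_Ioo_le_ofReal_mul_sub (by positivity) hupper).trans ?_
  rw [← ENNReal.ofReal_ofNat 2, ← ENNReal.ofReal_mul zero_le_two]
  refine ENNReal.ofReal_le_ofReal ?_
  calc hatw v r / (1 / 2) ^ 2 * (1 / 2 - r) = 2 * hatw v r - 4 * (hatw v r * r) := by ring
    _ ≤ 2 * hatw v r := by linarith [mul_nonneg hVr.le hr.1]
    _ ≤ 2 * (hatw v r / (1 - r)) := by
        gcongr
        exact le_div_self hVr.le (sub_pos.2 hr'.2) (by linarith [hr.1])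

theorem exists_lintegral_hatw_div_sq_le (hv : RadialWeight v) (hD : DoublingD v)
    (hM1 : M1v v < ⊤) :
    ∃ C : ℝ≥0, ∀ r ∈ Ico (0 : ℝ) 1, ∫⁻ s in Ioo r 1, ENNReal.ofReal (hatw v s / (1 - s) ^ 2) ≤
      C * ENNReal.ofReal (hatw v r / (1 - r)) := by
  obtain ⟨D, hD1, hD⟩ := hD
  obtain ⟨M, hM⟩ : ∃ M : ℝ≥0, M1v v = M := ⟨_, (ENNReal.coe_toNNReal hM1.ne).symm⟩
  refine ⟨2 + M ^ 2 * (2 * D).toNNReal, fun r hr ↦ ?_⟩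
  have hD0 : 0 < D := by linarith
  have hright {a : ℝ} (ha : a ∈ Ico (1 / 2) 1) (ha2 : 1 - r ≤ 2 * (1 - a)) (hra : r ≤ a) :
      ∫⁻ s in Ioo a 1, ENNReal.ofReal (hatw v s / (1 - s) ^ 2) ≤
        M ^ 2 * ENNReal.ofReal (2 * D) * ENNReal.ofReal (hatw v r / (1 - r)) := by
    have hVr : 0 < hatw v r := hv.hatw_pos hr
    have hVa := hv.antitoneOn_hatw hr ⟨hr.1.trans hra, ha.2⟩ hra
    have hr1 : 0 < 1 - r := sub_pos.2 hr.2
    rw [mul_assoc, ← ENNReal.ofReal_mul (by positivity), ← hM]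
    refine (hv.lintegral_hatw_div_sq_le_of_half_le hD0 hD ha).trans
      (mul_le_mul_right (ENNReal.ofReal_le_ofReal ?_) _)
    calc D * hatw v a / (1 - a) ≤ D * hatw v r / ((1 - r) / 2) := by gcongr; linarith
      _ = 2 * D * (hatw v r / (1 - r)) := by field_simp
  push_cast
  rw [add_mul]
  rcases le_or_gt (1 / 2) r with hhalf | hhalf
  · exact (hright ⟨hhalf, hr.2⟩ (by linarith [hr.2]) le_rfl).trans le_add_self
  · exact (lintegral_Ioo_le_add _ r (1 / 2) 1).trans
      (add_le_add (hv.lintegral_hatw_div_sq_Ioo_half_le ⟨hr.1, hhalf⟩)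
        (hright ⟨le_rfl, by norm_num⟩ (by linarith [hr.1]) hhalf.le))

theorem lintegral_hatw_div_pow_four_le (hv : RadialWeight v) {r : ℝ} (hr : r ∈ Ioo 0 1) :
    ∫⁻ s in Ioo 0 r, ENNReal.ofReal (hatw v s / (1 - s) ^ 4) ≤
      M2v v ^ 2 * ENNReal.ofReal (8 * hatw v r / (1 - r) ^ 3) := by
  obtain ⟨hr0, hr1⟩ := hr
  have hVr : 0 < hatw v r := hv.hatw_pos ⟨hr0.le, hr1⟩
  have : 0 < 1 - r := sub_pos.2 hr1
  have hlower (s : ℝ) (hs : s ∈ Ioo r ((1 + r) / 2)) :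
      ((1 - r) / 2) ^ 2 / hatw v r ≤ (1 - s) ^ 2 / hatw v s := by
    have hs' : s ∈ Ico 0 1 := ⟨hr0.le.trans hs.1.le, by linarith [hs.2]⟩
    have hVs := hv.hatw_pos hs'
    have hle := hv.antitoneOn_hatw ⟨hr0.le, hr1⟩ hs' hs.1.le
    gcongr
    linarith [hs.2]
  have hdual : ENNReal.ofReal (8 * hatw v r / (1 - r) ^ 3)⁻¹ ≤
      ∫⁻ s in Ioo r 1, ENNReal.ofReal ((1 - s) ^ 2 / hatw v s) := by
    refine le_trans (ENNReal.ofReal_le_ofReal (le_of_eq ?_))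
      ((ofReal_mul_sub_le_lintegral_Ioo (by positivity) hlower).trans
        (lintegral_mono_set (Ioo_subset_Ioo_right (by linarith))))
    rw [inv_div]
    ring
  exact le_mul_ofReal_of_mul_le (by positivity) hdual
    (lintegral_mul_lintegral_le_M2v_sq v ⟨hr0, hr1⟩)

theorem ofReal_hatw_half_le_lintegral (hv : RadialWeight v) :
    ENNReal.ofReal (hatw v (1 / 2) * (1 / 2)) ≤
      ∫⁻ s in Ioo 0 (1 / 2), ENNReal.ofReal (hatw v s / (1 - s) ^ 4) := by
  have hlower (s : ℝ) (hs : s ∈ Ioo (0 : ℝ) (1 / 2)) :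
      hatw v (1 / 2) ≤ hatw v s / (1 - s) ^ 4 := by
    have hs' : s ∈ Ico 0 1 := ⟨hs.1.le, by linarith [hs.2]⟩
    have h1s : 0 < 1 - s := sub_pos.2 hs'.2
    refine (hv.antitoneOn_hatw hs' (by norm_num) hs.2.le).trans ?_
    exact le_div_self (hv.hatw_pos hs').le (by positivity)
      (pow_le_one₀ h1s.le (by linarith [hs.1]))
  simpa using ofReal_mul_sub_le_lintegral_Ioo (hv.hatw_pos (by norm_num)).le hlower

theorem lintegral_one_sub_sq_div_hatw_ne_top (hv : RadialWeight v) (hM2 : M2v v < ⊤) :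
    ∫⁻ s in Ioo 0 1, ENNReal.ofReal ((1 - s) ^ 2 / hatw v s) ≠ ⊤ := by
  have hV : 0 < hatw v (1 / 2) := hv.hatw_pos (by norm_num)
  have hupper (s : ℝ) (hs : s ∈ Ioo (0 : ℝ) (1 / 2)) :
      (1 - s) ^ 2 / hatw v s ≤ 1 / hatw v (1 / 2) := by
    have hs' : s ∈ Ico 0 1 := ⟨hs.1.le, by linarith [hs.2]⟩
    have hle := hv.antitoneOn_hatw hs' (by norm_num) hs.2.le
    gcongr
    exact pow_le_one₀ (by linarith [hs'.2]) (by linarith [hs.1])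
  have hleft := (lintegral_Ioo_le_ofReal_mul_sub (by positivity) hupper).trans_lt
    ENNReal.ofReal_lt_top
  have hright := le_mul_ofReal_of_mul_le (y := (hatw v (1 / 2) * (1 / 2))⁻¹) (by positivity)
    (by simpa using hv.ofReal_hatw_half_le_lintegral)
    ((mul_comm _ _).trans_le (lintegral_mul_lintegral_le_M2v_sq v (r := 1 / 2) (by norm_num)))
  exact ne_top_of_le_ne_top (ENNReal.add_ne_top.2 ⟨hleft.ne, ne_top_of_le_ne_top
    (ENNReal.mul_ne_top (ENNReal.pow_ne_top hM2.ne) ENNReal.ofReal_ne_top) hright⟩)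
    (lintegral_Ioo_le_add _ 0 (1 / 2) 1)

theorem exists_ofReal_hatw_zero_le (hv : RadialWeight v) (hD : DoublingD v) (hM2 : M2v v < ⊤) :
    ∃ C : ℝ≥0, ∀ r ∈ Ioo (0 : ℝ) 1,
      ENNReal.ofReal (hatw v 0) ≤ C * ENNReal.ofReal (hatw v r / (1 - r) ^ 3) := by
  obtain ⟨D, hD1, hD⟩ := hD
  obtain ⟨M, hM⟩ : ∃ M : ℝ≥0, M2v v = M := ⟨_, (ENNReal.coe_toNNReal hM2.ne).symm⟩
  refine ⟨D.toNNReal * (1 + 16 * M ^ 2), fun r hr ↦ ?_⟩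
  have hr' : r ∈ Ico 0 1 := ⟨hr.1.le, hr.2⟩
  have hhalf : ENNReal.ofReal (hatw v (1 / 2)) ≤
      (1 + 16 * M ^ 2) * ENNReal.ofReal (hatw v r / (1 - r) ^ 3) := by
    rw [add_mul, one_mul]
    rcases le_or_gt r (1 / 2) with hr2 | hr2
    · refine le_add_right (ENNReal.ofReal_le_ofReal ?_)
      refine (hv.antitoneOn_hatw hr' (by norm_num) hr2).trans ?_
      exact le_div_self (hv.hatw_pos hr').le (pow_pos (sub_pos.2 hr.2) 3)
        (pow_le_one₀ (sub_pos.2 hr.2).le (by linarith [hr.1]))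
    · refine le_add_left ?_
      calc ENNReal.ofReal (hatw v (1 / 2))
          = 2 * ENNReal.ofReal (hatw v (1 / 2) * (1 / 2)) := by
            rw [← ENNReal.ofReal_ofNat 2, ← ENNReal.ofReal_mul zero_le_two]
            ring_nf
        _ ≤ 2 * ∫⁻ s in Ioo 0 r, ENNReal.ofReal (hatw v s / (1 - s) ^ 4) := by
            gcongr
            exact hv.ofReal_hatw_half_le_lintegral.trans
              (lintegral_mono_set (Ioo_subset_Ioo_right hr2.le))
        _ ≤ 2 * (M2v v ^ 2 * ENNReal.ofReal (8 * hatw v r / (1 - r) ^ 3)) := by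
            gcongr
            exact hv.lintegral_hatw_div_pow_four_le hr
        _ = 16 * M ^ 2 * ENNReal.ofReal (hatw v r / (1 - r) ^ 3) := by
            rw [hM, mul_div_assoc, ENNReal.ofReal_mul (by norm_num), ENNReal.ofReal_ofNat]
            ring
  have hzero : hatw v 0 ≤ D * hatw v (1 / 2) := by simpa using hD 0 (by norm_num)
  push_cast
  rw [mul_assoc]
  refine (ENNReal.ofReal_le_ofReal hzero).trans ?_
  rw [ENNReal.ofReal_mul (by linarith)]
  exact mul_le_mul_right hhalf _

theorem exists_lintegral_div_one_sub_le (hv : RadialWeight v) (hD : DoublingD v)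
    (hM1 : M1v v < ⊤) :
    ∃ C : ℝ≥0, ∀ t ∈ Ioo (0 : ℝ) 1,
      ∫⁻ r in Ioo t 1, ENNReal.ofReal (v r) * ENNReal.ofReal (1 / (1 - r)) ≤
        C * ENNReal.ofReal (hatw v t / (1 - t)) := by
  obtain ⟨C, hC⟩ := hv.exists_lintegral_hatw_div_sq_le hD hM1
  refine ⟨1 + C, fun t ht ↦ ?_⟩
  have hVt : 0 < hatw v t := hv.hatw_pos ⟨ht.1.le, ht.2⟩
  have hparts := lintegral_mul_ofReal_one_div_one_sub_pow 1 ht.2 le_rfl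
    (w := fun r ↦ ENNReal.ofReal (v r)) hv.1.ennreal_ofReal.aemeasurable
  simp only [pow_one, Nat.cast_one, one_mul, Nat.reduceAdd] at hparts
  rw [hparts, ← hv.ofReal_hatw ⟨ht.1.le, ht.2⟩, ← ENNReal.ofReal_mul' hVt.le, one_div_mul_eq_div,
    ENNReal.coe_add, ENNReal.coe_one, add_mul, one_mul]
  refine add_le_add le_rfl (le_trans (le_of_eq ?_) (hC t ⟨ht.1.le, ht.2⟩))
  refine setLIntegral_congr_fun measurableSet_Ioo fun s hs ↦ ?_
  have hs' : s ∈ Ico 0 1 := ⟨ht.1.le.trans hs.1.le, hs.2⟩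
  rw [← hv.ofReal_hatw hs', ← ENNReal.ofReal_mul' (hv.hatw_pos hs').le, one_div_mul_eq_div]

theorem exists_lintegral_div_one_sub_pow_three_le (hv : RadialWeight v) (hD : DoublingD v)
    (hM2 : M2v v < ⊤) :
    ∃ C : ℝ≥0, ∀ t ∈ Ioo (0 : ℝ) 1,
      ∫⁻ r in Ioo 0 t, ENNReal.ofReal (v r) * ENNReal.ofReal (1 / (1 - r) ^ 3) ≤
        C * ENNReal.ofReal (hatw v t / (1 - t) ^ 3) := by
  obtain ⟨C, hC⟩ := hv.exists_ofReal_hatw_zero_le hD hM2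
  obtain ⟨M, hM⟩ : ∃ M : ℝ≥0, M2v v = M := ⟨_, (ENNReal.coe_toNNReal hM2.ne).symm⟩
  refine ⟨C + 24 * M ^ 2, fun t ht ↦ ?_⟩
  have htail {s : ℝ} (hs : s ∈ Ico 0 1) :
      ∫⁻ r in Ioo s t, ENNReal.ofReal (v r) ≤ ENNReal.ofReal (hatw v s) := by
    rw [hv.ofReal_hatw hs]
    exact lintegral_mono_set (Ioo_subset_Ioo_right ht.2.le)
  have hhead : ∫⁻ s in Ioo 0 t, ENNReal.ofReal (1 / (1 - s) ^ 4) *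
      ∫⁻ r in Ioo s t, ENNReal.ofReal (v r) ≤
        M ^ 2 * ENNReal.ofReal (8 * hatw v t / (1 - t) ^ 3) := by
    refine le_trans (setLIntegral_mono' measurableSet_Ioo fun s hs ↦ ?_)
      (hM ▸ hv.lintegral_hatw_div_pow_four_le ht)
    have hs' : s ∈ Ico 0 1 := ⟨hs.1.le, hs.2.trans ht.2⟩
    rw [← one_div_mul_eq_div ((1 - s) ^ 4) (hatw v s),
      ENNReal.ofReal_mul' (hv.hatw_pos hs').le]
    exact mul_le_mul_right (htail hs') _
  rw [lintegral_mul_ofReal_one_div_one_sub_pow 3 one_pos ht.2.le hv.1.ennreal_ofReal.aemeasurable]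
  simp only [sub_zero, one_pow, div_one, ENNReal.ofReal_one, one_mul]
  refine (add_le_add ((htail (by norm_num)).trans (hC t ht)) (mul_le_mul_right hhead _)).trans_eq ?_
  rw [mul_div_assoc, ENNReal.ofReal_mul (by norm_num), ENNReal.ofReal_ofNat]
  push_cast
  ring

end RadialWeight

theorem enorm_le_add_lintegral_enorm_deriv {f : ℂ → ℂ} {R t : ℝ}
    (hf : DifferentiableOn ℂ f (Metric.ball 0 R)) (ht : t ∈ Ico 0 R) :
    ‖f t‖ₑ ≤ ‖f 0‖ₑ + ∫⁻ s in Ioo 0 t, ‖deriv f s‖ₑ := by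
  have hmem (s : ℝ) (hs : s ∈ uIcc 0 t) : (s : ℂ) ∈ Metric.ball (0 : ℂ) R := by
    rw [uIcc_of_le ht.1] at hs
    rw [mem_ball_zero_iff, Complex.norm_real, Real.norm_of_nonneg hs.1]
    exact hs.2.trans_lt ht.2
  have hftc : ∫ s in (0)..t, deriv f s = f t - f 0 := by
    rw [intervalIntegral.integral_eq_sub_of_hasDerivAt (f := fun s : ℝ ↦ f s) fun s hs ↦
      (hf.differentiableAt (Metric.isOpen_ball.mem_nhds (hmem s hs))).hasDerivAt.comp_ofReal,
      Complex.ofReal_zero]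
    exact ((hf.deriv Metric.isOpen_ball).continuousOn.comp
      Complex.continuous_ofReal.continuousOn hmem).intervalIntegrable
  calc ‖f t‖ₑ = ‖f 0 + ∫ s in (0)..t, deriv f s‖ₑ := by rw [hftc, add_sub_cancel]
    _ ≤ ‖f 0‖ₑ + ‖∫ s in (0)..t, deriv f s‖ₑ := enorm_add_le _ _
    _ ≤ ‖f 0‖ₑ + ∫⁻ s in Ioo 0 t, ‖deriv f s‖ₑ := by
        rw [intervalIntegral.integral_of_le ht.1, integral_Ioc_eq_integral_Ioo]
        gcongr
        exact enorm_integral_le_lintegral_enorm _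

theorem lintegral_sq_mul_le_of_differentiableOn {f : ℂ → ℂ} {R : ℝ}
    (hf : DifferentiableOn ℂ f (Metric.ball 0 R)) {U : ℝ → ℝ≥0∞}
    (hU : AEMeasurable U (volume.restrict (Ioo 0 R))) :
    ∫⁻ t in Ioo 0 R, ‖f t‖ₑ ^ 2 * U t ≤
      2 * (‖f 0‖ₑ ^ 2 * ∫⁻ t in Ioo 0 R, U t) +
        2 * ∫⁻ t in Ioo 0 R, U t * (∫⁻ s in Ioo 0 t, ‖deriv f s‖ₑ) ^ 2 := by
  calc ∫⁻ t in Ioo 0 R, ‖f t‖ₑ ^ 2 * U t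
      ≤ ∫⁻ t in Ioo 0 R, (2 * ‖f 0‖ₑ ^ 2 * U t +
          2 * (U t * (∫⁻ s in Ioo 0 t, ‖deriv f s‖ₑ) ^ 2)) :=
        setLIntegral_mono' measurableSet_Ioo fun t ht ↦ by
          refine (mul_le_mul_left (pow_le_pow_left₀ zero_le
            (enorm_le_add_lintegral_enorm_deriv hf ⟨ht.1.le, ht.2⟩) 2) _).trans ?_
          refine (mul_le_mul_left (add_sq_le_two_mul _ _) _).trans_eq ?_
          ring
    _ = _ := by
        rw [lintegral_add_left' (hU.const_mul _), lintegral_const_mul'' _ hU,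
          lintegral_const_mul' _ _ ENNReal.ofNat_ne_top, mul_assoc]

namespace RadialWeight

variable {v : ℝ → ℝ}

theorem lintegral_sq_mul_hatw_le (hv : RadialWeight v) {g : ℂ → ℂ}
    (hg : DifferentiableOn ℂ g (Metric.ball 0 1)) (hgm : Measurable g) :
    ∫⁻ t in Ioo (0 : ℝ) 1, ‖g t‖ₑ ^ 2 * ENNReal.ofReal (hatw v t) ≤
      ∫⁻ z, ‖g z‖ₑ ^ 2 ∂discMeasure v := by
  have hvm : Measurable fun r ↦ ENNReal.ofReal (v r) := hv.1.ennreal_ofReal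
  have hgr : Measurable fun t : ℝ ↦ ‖g t‖ₑ ^ 2 :=
    (hgm.comp Complex.measurable_ofReal).enorm.pow_const 2
  have hmeas : Measurable
      (Function.uncurry fun t r : ℝ ↦ ‖g t‖ₑ ^ 2 * ENNReal.ofReal (v r)) :=
    (hgr.comp measurable_fst).mul (hvm.comp measurable_snd)
  calc ∫⁻ t in Ioo (0 : ℝ) 1, ‖g t‖ₑ ^ 2 * ENNReal.ofReal (hatw v t)
      = ∫⁻ t in Ioo (0 : ℝ) 1, ∫⁻ r in Ioo t 1, ‖g t‖ₑ ^ 2 * ENNReal.ofReal (v r) :=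
        setLIntegral_congr_fun measurableSet_Ioo fun t ht ↦ by
          rw [hv.ofReal_hatw ⟨ht.1.le, ht.2⟩, lintegral_const_mul _ hvm]
    _ = ∫⁻ r in Ioo (0 : ℝ) 1, ∫⁻ t in Ioo 0 r, ‖g t‖ₑ ^ 2 * ENNReal.ofReal (v r) :=
        lintegral_Ioo_Ioo_swap hmeas.aemeasurable
    _ ≤ ∫⁻ r in Ioo 0 1, ENNReal.ofReal (v r) *
          (ENNReal.ofReal r * ∫⁻ θ in Ioo (-π) π, ‖g (circleMap 0 r θ)‖ₑ ^ 2) :=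
        setLIntegral_mono' measurableSet_Ioo fun r hr ↦ by
          rw [lintegral_mul_const' _ _ ENNReal.ofReal_ne_top, mul_comm]
          exact mul_le_mul_right (lintegral_radius_sq_le hg hr.1.le hr.2) _
    _ = ∫⁻ z, ‖g z‖ₑ ^ 2 ∂discMeasure v := (lintegral_discMeasure hv.1 (hgm.enorm.pow_const 2)).symm

theorem aemeasurable_hatw_div (hv : RadialWeight v) (n : ℕ) :
    AEMeasurable (fun t ↦ ENNReal.ofReal (hatw v t / (1 - t) ^ n))
      (volume.restrict (Ioo 0 1)) :=
  (hv.aemeasurable_hatw.div (by fun_prop)).ennreal_ofReal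

theorem lintegral_hatw_div_sq_mul_sq_lintegral_le (hv : RadialWeight v) {C : ℝ≥0}
    (hC : ∀ r ∈ Ico (0 : ℝ) 1, ∫⁻ s in Ioo r 1, ENNReal.ofReal (hatw v s / (1 - s) ^ 2) ≤
      C * ENNReal.ofReal (hatw v r / (1 - r))) {h : ℝ → ℝ≥0∞}
    (hh : AEMeasurable h (volume.restrict (Ioo 0 1)))
    (hh' : ∀ᵐ t ∂volume.restrict (Ioo 0 1), h t ≠ ∞) :
    ∫⁻ t in Ioo 0 1, ENNReal.ofReal (hatw v t / (1 - t) ^ 2) * (∫⁻ s in Ioo 0 t, h s) ^ 2 ≤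
      4 * C ^ 2 * ∫⁻ s in Ioo 0 1, h s ^ 2 * ENNReal.ofReal (hatw v s) := by
  have hardy := lintegral_mul_sq_lintegral_Ioo_left_le (c := C ^ 2) (hv.aemeasurable_hatw_div 2)
    hv.aemeasurable_hatw.ennreal_ofReal hh (.of_forall fun _ ↦ ENNReal.ofReal_ne_top) hh'
    fun s hs ↦ ?_
  · simpa only [mul_comm (h _ ^ 2), ENNReal.coe_pow] using hardy
  · have hVs := hv.hatw_pos ⟨hs.1.le, hs.2⟩
    rw [← ENNReal.ofReal_mul' hVs.le, div_mul_eq_mul_div, ← sq, ← div_pow,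
      ENNReal.ofReal_pow (div_nonneg hVs.le (sub_pos.2 hs.2).le), ENNReal.coe_pow, ← mul_pow]
    exact pow_le_pow_left₀ zero_le (hC s ⟨hs.1.le, hs.2⟩) 2

theorem exists_L2V2sq_le (hv : RadialWeight v) (hD : DoublingD v) (hM1 : M1v v < ⊤) :
    ∃ A : ℝ≥0, ∀ f : ℂ → ℂ, DifferentiableOn ℂ f (Metric.ball 0 1) →
      L2V2sq v (fun t ↦ f t) ≤ A * DvSq v f := by
  obtain ⟨C, hC⟩ := hv.exists_lintegral_hatw_div_sq_le hD hM1
  refine ⟨2 * C * (hatw v 0).toNNReal + 8 * C ^ 2 * NNReal.pi, fun f hf ↦ ?_⟩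
  let U (t : ℝ) : ℝ≥0∞ := ENNReal.ofReal (hatw v t / (1 - t) ^ 2)
  have hU0 : ∫⁻ t in Ioo 0 1, U t ≤ C * ENNReal.ofReal (hatw v 0) := by
    simpa using hC 0 (by norm_num)
  have hderiv : Measurable fun t : ℝ ↦ ‖deriv f t‖ₑ := by fun_prop
  have hardy := (hv.lintegral_hatw_div_sq_mul_sq_lintegral_le hC hderiv.aemeasurable
    (.of_forall fun _ ↦ enorm_ne_top)).trans (mul_le_mul_right
      (hv.lintegral_sq_mul_hatw_le (hf.deriv Metric.isOpen_ball) (measurable_deriv f)) _)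
  calc L2V2sq v (fun t ↦ f t)
      ≤ 2 * (‖f 0‖ₑ ^ 2 * ∫⁻ t in Ioo 0 1, U t) +
          2 * ∫⁻ t in Ioo 0 1, U t * (∫⁻ s in Ioo 0 t, ‖deriv f s‖ₑ) ^ 2 :=
        lintegral_sq_mul_le_of_differentiableOn hf (hv.aemeasurable_hatw_div 2)
    _ ≤ 2 * (‖f 0‖ₑ ^ 2 * (C * ENNReal.ofReal (hatw v 0))) +
          2 * (4 * C ^ 2 * ∫⁻ z, ‖deriv f z‖ₑ ^ 2 ∂discMeasure v) :=
        add_le_add (mul_le_mul_right (mul_le_mul_right hU0 _) _) (mul_le_mul_right hardy _)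
    _ = 2 * C * ENNReal.ofReal (hatw v 0) * ‖f 0‖ₑ ^ 2 + 8 * C ^ 2 * ENNReal.ofReal π *
          ((ENNReal.ofReal π)⁻¹ * ∫⁻ z, ‖deriv f z‖ₑ ^ 2 ∂discMeasure v) := by
        rw [mul_assoc (8 * (C : ℝ≥0∞) ^ 2), ENNReal.mul_inv_cancel_left (by simp [pi_pos])
          ENNReal.ofReal_ne_top]
        ring
    _ ≤ (2 * C * ENNReal.ofReal (hatw v 0) + 8 * C ^ 2 * ENNReal.ofReal π) * DvSq v f := by
        rw [DvSq_eq hv.1, add_mul]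
        exact add_le_add (mul_le_mul_right le_self_add _) (mul_le_mul_right le_add_self _)
    _ = _ := by
        rw [← NNReal.coe_real_pi, ENNReal.ofReal_coe_nnreal]
        push_cast
        rfl

end RadialWeight

section DerivKernel

/-- The size of `∂/∂z (1 - t z)⁻¹ = t (1 - t z)⁻²`, without the harmless factor `t ≤ 1`. -/
def derivKernel (z : ℂ) (t : ℝ) : ℝ≥0∞ := ENNReal.ofReal (1 / ‖1 - t * z‖ ^ 2)

theorem measurable_uncurry_derivKernel : Measurable (Function.uncurry derivKernel) := by
  unfold derivKernel Function.uncurry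
  fun_prop

theorem one_sub_mul_norm_le_norm_one_sub {t : ℝ} (ht : 0 ≤ t) (z : ℂ) :
    1 - t * ‖z‖ ≤ ‖1 - t * z‖ := by
  simpa [abs_of_nonneg ht] using norm_sub_norm_le (1 : ℂ) (t * z)

theorem derivKernel_le {t : ℝ} {z : ℂ} (ht : 0 ≤ t) (htz : t * ‖z‖ < 1) :
    derivKernel z t ≤ ENNReal.ofReal (1 / (1 - t * ‖z‖) ^ 2) :=
  ENNReal.ofReal_le_ofReal (one_div_le_one_div_of_le (pow_pos (sub_pos.2 htz) 2)
    (pow_le_pow_left₀ (sub_pos.2 htz).le (one_sub_mul_norm_le_norm_one_sub ht z) 2))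

theorem lintegral_derivKernel_circleMap {s r : ℝ} (hsr : |s * r| < 1) :
    ∫⁻ θ in Ioo (-π) π, derivKernel (circleMap 0 r θ) s =
      ENNReal.ofReal (2 * π / (1 - (s * r) ^ 2)) := by
  rw [← lintegral_ofReal_one_div_norm_one_sub_sq hsr]
  simp [derivKernel, circleMap, mul_assoc]

theorem lintegral_derivKernel_mul_circleMap_le {t s r : ℝ} (ht : t ∈ Ioo 0 1) (hs : s ∈ Ioo 0 1)
    (hr : r ∈ Ioo 0 1) :
    ∫⁻ θ in Ioo (-π) π, derivKernel (circleMap 0 r θ) t * derivKernel (circleMap 0 r θ) s ≤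
      ENNReal.ofReal (2 * π) * ENNReal.ofReal (1 / (1 - t * r) ^ 2 * (1 / (1 - r))) := by
  have hnorm (θ : ℝ) : ‖circleMap 0 r θ‖ = r := by rw [norm_circleMap_zero, abs_of_pos hr.1]
  have htr : t * r < 1 := mul_lt_one_of_nonneg_of_lt_one_left ht.1.le ht.2 hr.2.le
  have hsr : s * r < 1 := mul_lt_one_of_nonneg_of_lt_one_left hs.1.le hs.2 hr.2.le
  have hsr0 : 0 < s * r := mul_pos hs.1 hr.1
  have h1r : 0 < 1 - r := sub_pos.2 hr.2
  calc ∫⁻ θ in Ioo (-π) π, derivKernel (circleMap 0 r θ) t * derivKernel (circleMap 0 r θ) s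
      ≤ ∫⁻ θ in Ioo (-π) π,
          ENNReal.ofReal (1 / (1 - t * r) ^ 2) * derivKernel (circleMap 0 r θ) s := by
        refine lintegral_mono fun θ ↦ mul_le_mul_left ?_ _
        simpa only [hnorm] using derivKernel_le (z := circleMap 0 r θ) ht.1.le (by rwa [hnorm])
    _ = ENNReal.ofReal (1 / (1 - t * r) ^ 2) * ENNReal.ofReal (2 * π / (1 - (s * r) ^ 2)) := by
        rw [lintegral_const_mul' _ _ ENNReal.ofReal_ne_top,
          lintegral_derivKernel_circleMap (by rwa [abs_of_pos hsr0])]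
    _ ≤ ENNReal.ofReal (1 / (1 - t * r) ^ 2) * ENNReal.ofReal (2 * π * (1 / (1 - r))) := by
        refine mul_le_mul_right (ENNReal.ofReal_le_ofReal ?_) _
        rw [mul_one_div]
        gcongr
        nlinarith [mul_lt_of_lt_one_left hr.1 hs.2]
    _ = _ := by
        rw [← ENNReal.ofReal_mul (by positivity), ← ENNReal.ofReal_mul (by positivity)]
        ring_nf

theorem lintegral_derivKernel_mul_discMeasure_le {v : ℝ → ℝ} (hv : Measurable v) {t s : ℝ}
    (ht : t ∈ Ioo 0 1) (hs : s ∈ Ioo 0 1) :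
    ∫⁻ z, derivKernel z t * derivKernel z s ∂discMeasure v ≤ ENNReal.ofReal (2 * π) *
      ∫⁻ r in Ioo 0 1, ENNReal.ofReal (v r) *
        ENNReal.ofReal (1 / (1 - t * r) ^ 2 * (1 / (1 - r))) := by
  have hmeas : Measurable fun z ↦ derivKernel z t * derivKernel z s :=
    measurable_uncurry_derivKernel.of_uncurry_right.mul
      measurable_uncurry_derivKernel.of_uncurry_right
  rw [lintegral_discMeasure hv hmeas,
    ← lintegral_const_mul' _ _ ENNReal.ofReal_ne_top]
  refine setLIntegral_mono' measurableSet_Ioo fun r hr ↦ ?_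
  rw [mul_left_comm (ENNReal.ofReal (2 * π))]
  refine mul_le_mul_right ((mul_le_of_le_one_left' ?_).trans
    (lintegral_derivKernel_mul_circleMap_le ht hs hr)) _
  rw [← ENNReal.ofReal_one]
  exact ENNReal.ofReal_le_ofReal hr.2.le

end DerivKernel

namespace RadialWeight

variable {v : ℝ → ℝ}

theorem exists_lintegral_div_one_sub_mul_sq_le (hv : RadialWeight v) (hD : DoublingD v)
    (hM1 : M1v v < ⊤) (hM2 : M2v v < ⊤) :
    ∃ C : ℝ≥0, ∀ t ∈ Ioo (0 : ℝ) 1,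
      ∫⁻ r in Ioo 0 1, ENNReal.ofReal (v r) *
        ENNReal.ofReal (1 / (1 - t * r) ^ 2 * (1 / (1 - r))) ≤
        C * ENNReal.ofReal (hatw v t / (1 - t) ^ 3) := by
  obtain ⟨C₁, hC₁⟩ := hv.exists_lintegral_div_one_sub_le hD hM1
  obtain ⟨C₃, hC₃⟩ := hv.exists_lintegral_div_one_sub_pow_three_le hD hM2
  refine ⟨C₃ + C₁, fun t ht ↦ ?_⟩
  have h1t : 0 < 1 - t := sub_pos.2 ht.2
  let w (r : ℝ) : ℝ≥0∞ := ENNReal.ofReal (v r) *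
    ENNReal.ofReal (1 / (1 - t * r) ^ 2 * (1 / (1 - r)))
  have hhead : ∫⁻ r in Ioo 0 t, w r ≤ C₃ * ENNReal.ofReal (hatw v t / (1 - t) ^ 3) := by
    refine (setLIntegral_mono' measurableSet_Ioo fun r hr ↦ ?_).trans (hC₃ t ht)
    have h1r : 0 < 1 - r := by linarith [hr.2]
    refine mul_le_mul_right (ENNReal.ofReal_le_ofReal ?_) _
    calc 1 / (1 - t * r) ^ 2 * (1 / (1 - r)) ≤ 1 / (1 - r) ^ 2 * (1 / (1 - r)) := by
          gcongr
          exact mul_le_of_le_one_left hr.1.le ht.2.le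
      _ = 1 / (1 - r) ^ 3 := by field_simp
  have htail : ∫⁻ r in Ioo t 1, w r ≤ C₁ * ENNReal.ofReal (hatw v t / (1 - t) ^ 3) := by
    calc ∫⁻ r in Ioo t 1, w r
        ≤ ∫⁻ r in Ioo t 1, ENNReal.ofReal (1 / (1 - t) ^ 2) *
            (ENNReal.ofReal (v r) * ENNReal.ofReal (1 / (1 - r))) := by
          refine setLIntegral_mono' measurableSet_Ioo fun r hr ↦ ?_
          have h1r : 0 < 1 - r := sub_pos.2 hr.2
          rw [mul_left_comm, ← ENNReal.ofReal_mul (by positivity)]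
          refine mul_le_mul_right (ENNReal.ofReal_le_ofReal ?_) _
          gcongr
          exact mul_le_of_le_one_right ht.1.le hr.2.le
      _ ≤ ENNReal.ofReal (1 / (1 - t) ^ 2) * (C₁ * ENNReal.ofReal (hatw v t / (1 - t))) := by
          rw [lintegral_const_mul' _ _ ENNReal.ofReal_ne_top]
          exact mul_le_mul_right (hC₁ t ht) _
      _ = C₁ * ENNReal.ofReal (hatw v t / (1 - t) ^ 3) := by
          rw [mul_left_comm, ← ENNReal.ofReal_mul (by positivity)]
          congr 2
          field_simp
  rw [ENNReal.coe_add, add_mul]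
  exact (lintegral_Ioo_le_add w 0 t 1).trans (add_le_add hhead htail)

theorem exists_lintegral_derivKernel_mul_le (hv : RadialWeight v) (hD : DoublingD v)
    (hM1 : M1v v < ⊤) (hM2 : M2v v < ⊤) :
    ∃ C : ℝ≥0, ∀ t ∈ Ioo (0 : ℝ) 1, ∀ s ∈ Ioo (0 : ℝ) 1,
      ∫⁻ z, derivKernel z t * derivKernel z s ∂discMeasure v ≤
        C * ENNReal.ofReal (hatw v t / (1 - t) ^ 3) := by
  obtain ⟨C, hC⟩ := hv.exists_lintegral_div_one_sub_mul_sq_le hD hM1 hM2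
  refine ⟨(2 * π).toNNReal * C, fun t ht s hs ↦ ?_⟩
  rw [ENNReal.coe_mul, mul_assoc]
  exact (lintegral_derivKernel_mul_discMeasure_le hv.1 ht hs).trans (mul_le_mul_right (hC t ht) _)

theorem lintegral_mul_hatw_div_pow_three_mul_lintegral_le (hv : RadialWeight v) {M : ℝ≥0}
    (hM : M2v v = M) {φ : ℝ → ℝ≥0∞} (hφ : AEMeasurable φ (volume.restrict (Ioo 0 1)))
    (hφ' : ∀ᵐ t ∂volume.restrict (Ioo 0 1), φ t ≠ ∞) :
    ∫⁻ s in Ioo 0 1, φ s * ENNReal.ofReal (hatw v s / (1 - s) ^ 3) * ∫⁻ t in Ioo s 1, φ t ≤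
      16 * M ^ 2 * ∫⁻ s in Ioo 0 1, φ s ^ 2 * ENNReal.ofReal (hatw v s / (1 - s) ^ 2) := by
  let w (n : ℕ) (s : ℝ) : ℝ≥0∞ := ENNReal.ofReal (hatw v s / (1 - s) ^ n)
  have hw (s : ℝ) (hs : s ∈ Ioo 0 1) : w 3 s ^ 2 = w 4 s * w 2 s := by
    have hVs := hv.hatw_pos ⟨hs.1.le, hs.2⟩
    have h1s : 0 < 1 - s := sub_pos.2 hs.2
    rw [← ENNReal.ofReal_pow (by positivity), ← ENNReal.ofReal_mul (by positivity)]
    congr 1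
    field_simp
  set N := ∫⁻ s in Ioo 0 1, φ s ^ 2 * w 2 s with hN
  have hardy : ∫⁻ s in Ioo 0 1, w 4 s * (∫⁻ t in Ioo s 1, φ t) ^ 2 ≤ (16 * M ^ 2) ^ 2 * N := by
    have h := lintegral_mul_sq_lintegral_Ioo_right_le (c := (8 * M ^ 2) ^ 2)
      (hv.aemeasurable_hatw_div 4) (hv.aemeasurable_hatw_div 2) hφ
      (.of_forall fun _ ↦ ENNReal.ofReal_ne_top) hφ' fun s hs ↦ ?_
    · refine h.trans_eq ?_
      simp only [hN, mul_comm (φ _ ^ 2)]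
      push_cast
      ring
    · rw [← hw s hs, ENNReal.coe_pow, ← mul_pow]
      refine pow_le_pow_left₀ zero_le ((hv.lintegral_hatw_div_pow_four_le hs).trans_eq ?_) 2
      rw [hM, mul_div_assoc, ENNReal.ofReal_mul (by norm_num), ENNReal.ofReal_ofNat]
      push_cast
      ring
  have htail : Antitone fun s ↦ ∫⁻ t in Ioo s 1, φ t := fun _ _ hst ↦
    lintegral_mono_set (Ioo_subset_Ioo_left hst)
  rw [← ENNReal.pow_le_pow_left_iff two_ne_zero]
  calc (∫⁻ s in Ioo 0 1, φ s * w 3 s * ∫⁻ t in Ioo s 1, φ t) ^ 2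
      ≤ N * ∫⁻ s in Ioo 0 1, w 4 s * (∫⁻ t in Ioo s 1, φ t) ^ 2 := by
        refine sq_lintegral_le_of_sq_le_mul ((hφ.pow_const 2).mul (hv.aemeasurable_hatw_div 2))
          ((hv.aemeasurable_hatw_div 4).mul (htail.measurable.pow_const 2).aemeasurable) ?_
        filter_upwards [ae_restrict_mem measurableSet_Ioo] with s hs
        rw [mul_pow, mul_pow, hw s hs]
        exact le_of_eq (by ring)
    _ ≤ N * ((16 * M ^ 2) ^ 2 * N) := mul_le_mul_right hardy _
    _ = (16 * M ^ 2 * N) ^ 2 := by ring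

theorem sq_lintegral_le_lintegral_sq_mul_hatw (hv : RadialWeight v) {φ : ℝ → ℝ≥0∞}
    (hφ : AEMeasurable φ (volume.restrict (Ioo 0 1))) :
    (∫⁻ t in Ioo 0 1, φ t) ^ 2 ≤ (∫⁻ t in Ioo 0 1, ENNReal.ofReal ((1 - t) ^ 2 / hatw v t)) *
      ∫⁻ t in Ioo 0 1, φ t ^ 2 * ENNReal.ofReal (hatw v t / (1 - t) ^ 2) := by
  refine sq_lintegral_le_of_sq_le_mul (AEMeasurable.ennreal_ofReal
    (AEMeasurable.div (by fun_prop) hv.aemeasurable_hatw))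
    ((hφ.pow_const 2).mul (hv.aemeasurable_hatw_div 2)) ?_
  filter_upwards [ae_restrict_mem measurableSet_Ioo] with t ht
  have hVt := hv.hatw_pos ⟨ht.1.le, ht.2⟩
  have h1t : 0 < 1 - t := sub_pos.2 ht.2
  rw [mul_left_comm, ← ENNReal.ofReal_mul (by positivity),
    div_mul_div_cancel₀ hVt.ne', div_self (by positivity), ENNReal.ofReal_one, mul_one]

theorem exists_lintegral_sq_lintegral_mul_derivKernel_le (hv : RadialWeight v) (hD : DoublingD v)
    (hM1 : M1v v < ⊤) (hM2 : M2v v < ⊤) :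
    ∃ C : ℝ≥0, ∀ φ : ℝ → ℝ≥0∞, AEMeasurable φ (volume.restrict (Ioo 0 1)) →
      (∀ᵐ t ∂volume.restrict (Ioo 0 1), φ t ≠ ∞) →
      ∫⁻ z, (∫⁻ t in Ioo 0 1, φ t * derivKernel z t) ^ 2 ∂discMeasure v ≤
        C * ∫⁻ t in Ioo 0 1, φ t ^ 2 * ENNReal.ofReal (hatw v t / (1 - t) ^ 2) := by
  obtain ⟨C, hC⟩ := hv.exists_lintegral_derivKernel_mul_le hD hM1 hM2
  obtain ⟨M, hM⟩ : ∃ M : ℝ≥0, M2v v = M := ⟨_, (ENNReal.coe_toNNReal hM2.ne).symm⟩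
  refine ⟨2 * C * (16 * M ^ 2), fun φ hφ hφ' ↦ ?_⟩
  calc ∫⁻ z, (∫⁻ t in Ioo 0 1, φ t * derivKernel z t) ^ 2 ∂discMeasure v
      ≤ 2 * ∫⁻ s in Ioo 0 1, φ s * (C * ENNReal.ofReal (hatw v s / (1 - s) ^ 3)) *
          ∫⁻ t in {t | t ≥ s}, φ t ∂volume.restrict (Ioo 0 1) := by
        refine lintegral_sq_lintegral_mul_le_two_mul (R := (· ≥ ·))
          (measurableSet_le measurable_snd measurable_fst) hφ measurable_uncurry_derivKernel ?_
        filter_upwards [ae_restrict_mem measurableSet_Ioo] with s hs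
        filter_upwards [ae_restrict_mem measurableSet_Ioo] with t ht using hC s hs t ht
    _ = 2 * C * ∫⁻ s in Ioo 0 1, φ s * ENNReal.ofReal (hatw v s / (1 - s) ^ 3) *
          ∫⁻ t in Ioo s 1, φ t := by
        rw [mul_assoc, ← lintegral_const_mul' _ _ ENNReal.coe_ne_top]
        congr 1
        refine setLIntegral_congr_fun measurableSet_Ioo fun s hs ↦ ?_
        simp only [ge_iff_le, restrict_Ioo_restrict_ge hs.1.le]
        ring
    _ ≤ 2 * C * (16 * M ^ 2 * ∫⁻ t in Ioo 0 1, φ t ^ 2 *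
          ENNReal.ofReal (hatw v t / (1 - t) ^ 2)) :=
        mul_le_mul_right (hv.lintegral_mul_hatw_div_pow_three_mul_lintegral_le hM hφ hφ') _
    _ = _ := by
        push_cast
        ring

end RadialWeight

section HilbertOperator

variable {ψ : ℝ → ℂ}

theorem hasDerivAt_const_div_one_sub_mul (c : ℂ) {t z : ℂ} (h : 1 - t * z ≠ 0) :
    HasDerivAt (fun z ↦ c / (1 - t * z)) (c * t / (1 - t * z) ^ 2) z := by
  have hden : HasDerivAt (fun z ↦ 1 - t * z) (-t) z := by
    simpa using ((hasDerivAt_id z).const_mul t).const_sub 1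
  exact ((hasDerivAt_const z c).div hden h).congr_deriv (by ring)

theorem half_one_sub_norm_le_norm_one_sub {t : ℝ} (ht : t ∈ Ioo 0 1) {z₀ z : ℂ}
    (hz : z ∈ Metric.ball z₀ ((1 - ‖z₀‖) / 2)) : (1 - ‖z₀‖) / 2 ≤ ‖1 - t * z‖ := by
  have hzz₀ := norm_sub_norm_le z z₀
  rw [mem_ball_iff_norm] at hz
  linarith [one_sub_mul_norm_le_norm_one_sub ht.1.le z,
    mul_le_of_le_one_left (norm_nonneg z) ht.2.le]

theorem enorm_mul_div_le (c : ℂ) {t : ℝ} (ht : t ∈ Ioo 0 1) (z : ℂ) :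
    ‖c * t / (1 - t * z) ^ 2‖ₑ ≤ ‖c‖ₑ * derivKernel z t := by
  rw [derivKernel, ← ofReal_norm, ← ofReal_norm, ← ENNReal.ofReal_mul (norm_nonneg _)]
  refine ENNReal.ofReal_le_ofReal ?_
  rw [norm_div, norm_mul, norm_pow, mul_one_div, Complex.norm_of_nonneg ht.1.le]
  gcongr
  exact mul_le_of_le_one_right (norm_nonneg _) ht.2.le

theorem hasDerivAt_Hop (hψ : IntegrableOn ψ (Ioo 0 1)) {z₀ : ℂ} (hz₀ : z₀ ∈ Metric.ball 0 1) :
    HasDerivAt (Hop ψ) (∫ t in Ioo (0 : ℝ) 1, ψ t * t / (1 - t * z₀) ^ 2) z₀ := by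
  rw [mem_ball_zero_iff] at hz₀
  set δ := (1 - ‖z₀‖) / 2
  have hδ0 : 0 < δ := half_pos (sub_pos.2 hz₀)
  have hψm : AEMeasurable ψ (volume.restrict (Ioo 0 1)) := hψ.1.aemeasurable
  have hmeas (z : ℂ) : AEStronglyMeasurable (fun t : ℝ ↦ ψ t / (1 - t * z))
      (volume.restrict (Ioo 0 1)) :=
    (hψm.div (by fun_prop)).aestronglyMeasurable
  have h_int : Integrable (fun t : ℝ ↦ ψ t / (1 - t * z₀)) (volume.restrict (Ioo 0 1)) := by
    refine (hψ.norm.mul_const (1 / δ)).mono' (hmeas z₀) ?_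
    filter_upwards [ae_restrict_mem measurableSet_Ioo] with t ht
    rw [norm_div, mul_one_div]
    gcongr
    exact half_one_sub_norm_le_norm_one_sub ht (Metric.mem_ball_self hδ0)
  have hmeas' : AEStronglyMeasurable (fun t : ℝ ↦ ψ t * t / (1 - t * z₀) ^ 2)
      (volume.restrict (Ioo 0 1)) :=
    ((hψm.mul (by fun_prop)).div (by fun_prop)).aestronglyMeasurable
  refine (hasDerivAt_integral_of_dominated_loc_of_deriv_le (bound := fun t ↦ ‖ψ t‖ * (1 / δ ^ 2))
    (F' := fun z t ↦ ψ t * t / (1 - t * z) ^ 2) (Metric.ball_mem_nhds _ hδ0) (.of_forall hmeas)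
    h_int hmeas' ?_ (hψ.norm.mul_const _) ?_).2
  · filter_upwards [ae_restrict_mem measurableSet_Ioo] with t ht z hz
    rw [norm_div, norm_mul, norm_pow, mul_one_div, Complex.norm_of_nonneg ht.1.le]
    gcongr
    · exact mul_le_of_le_one_right (norm_nonneg _) ht.2.le
    · exact half_one_sub_norm_le_norm_one_sub ht hz
  · filter_upwards [ae_restrict_mem measurableSet_Ioo] with t ht z hz
    exact hasDerivAt_const_div_one_sub_mul _ (norm_pos_iff.1
      (hδ0.trans_le (half_one_sub_norm_le_norm_one_sub ht hz)))

theorem differentiableOn_Hop (hψ : IntegrableOn ψ (Ioo 0 1)) :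
    DifferentiableOn ℂ (Hop ψ) (Metric.ball 0 1) := fun _ hz ↦
  (hasDerivAt_Hop hψ hz).differentiableAt.differentiableWithinAt

theorem enorm_Hop_zero_le (ψ : ℝ → ℂ) : ‖Hop ψ 0‖ₑ ≤ ∫⁻ t in Ioo 0 1, ‖ψ t‖ₑ := by
  simpa [Hop] using enorm_integral_le_lintegral_enorm ψ (μ := volume.restrict (Ioo 0 1))

theorem enorm_deriv_Hop_le (hψ : IntegrableOn ψ (Ioo 0 1)) {z : ℂ} (hz : z ∈ Metric.ball 0 1) :
    ‖deriv (Hop ψ) z‖ₑ ≤ ∫⁻ t in Ioo 0 1, ‖ψ t‖ₑ * derivKernel z t := by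
  rw [(hasDerivAt_Hop hψ hz).deriv]
  exact (enorm_integral_le_lintegral_enorm _).trans
    (setLIntegral_mono' measurableSet_Ioo fun t ht ↦ enorm_mul_div_le _ ht z)

theorem DvSq_Hop_le {v : ℝ → ℝ} (hv : Measurable v) (hψ : IntegrableOn ψ (Ioo 0 1)) :
    DvSq v (Hop ψ) ≤ (∫⁻ t in Ioo 0 1, ‖ψ t‖ₑ) ^ 2 + (ENNReal.ofReal π)⁻¹ *
      ∫⁻ z, (∫⁻ t in Ioo 0 1, ‖ψ t‖ₑ * derivKernel z t) ^ 2 ∂discMeasure v := by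
  rw [DvSq_eq hv]
  refine add_le_add (pow_le_pow_left₀ zero_le (enorm_Hop_zero_le ψ) 2)
    (mul_le_mul_right (lintegral_mono_ae ?_) _)
  filter_upwards [(withDensity_absolutelyContinuous _ _).ae_le
    (ae_restrict_mem Metric.isOpen_ball.measurableSet)] with z hz
  exact pow_le_pow_left₀ zero_le (enorm_deriv_Hop_le hψ hz) 2

theorem L2V2sq_norm (v : ℝ → ℝ) (φ : ℝ → ℂ) : L2V2sq v (fun t ↦ (‖φ t‖ : ℂ)) = L2V2sq v φ := by
  simp [L2V2sq]

end HilbertOperator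

namespace RadialWeight

variable {v : ℝ → ℝ}

theorem integrableOn_of_L2V2sq_lt_top (hv : RadialWeight v) (hM2 : M2v v < ⊤) {ψ : ℝ → ℂ}
    (hψ : AEStronglyMeasurable ψ (volume.restrict (Ioo 0 1))) (hfin : L2V2sq v ψ < ⊤) :
    IntegrableOn ψ (Ioo 0 1) :=
  ⟨hψ, (ENNReal.pow_lt_top_iff.1 <|
    (hv.sq_lintegral_le_lintegral_sq_mul_hatw hψ.enorm).trans_lt <|
      ENNReal.mul_lt_top (hv.lintegral_one_sub_sq_div_hatw_ne_top hM2).lt_top hfin).resolve_right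
    two_ne_zero⟩

theorem exists_DvSq_Hop_le (hv : RadialWeight v) (hD : DoublingD v) (hM1 : M1v v < ⊤)
    (hM2 : M2v v < ⊤) :
    ∃ B : ℝ≥0, ∀ ψ : ℝ → ℂ, IntegrableOn ψ (Ioo 0 1) → DvSq v (Hop ψ) ≤ B * L2V2sq v ψ := by
  obtain ⟨C, hC⟩ := hv.exists_lintegral_sq_lintegral_mul_derivKernel_le hD hM1 hM2
  obtain ⟨I, hI⟩ : ∃ I : ℝ≥0, ∫⁻ s in Ioo 0 1, ENNReal.ofReal ((1 - s) ^ 2 / hatw v s) = I :=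
    ⟨_, (ENNReal.coe_toNNReal (hv.lintegral_one_sub_sq_div_hatw_ne_top hM2)).symm⟩
  refine ⟨I + NNReal.pi⁻¹ * C, fun ψ hψ ↦ (DvSq_Hop_le hv.1 hψ).trans ?_⟩
  have hψm := hψ.1.enorm
  have hvalue := hv.sq_lintegral_le_lintegral_sq_mul_hatw hψm
  rw [hI] at hvalue
  have hderiv := hC _ hψm (.of_forall fun _ ↦ enorm_ne_top)
  refine (add_le_add hvalue (mul_le_mul_right hderiv _)).trans_eq ?_
  rw [← NNReal.coe_real_pi, ENNReal.ofReal_coe_nnreal, ENNReal.coe_add, ENNReal.coe_mul,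
    ENNReal.coe_inv NNReal.pi_ne_zero, add_mul, mul_assoc]
  rfl

theorem exists_DvSq_Hop_le_DvSq (hv : RadialWeight v) (hD : DoublingD v) (hM1 : M1v v < ⊤)
    (hM2 : M2v v < ⊤) :
    ∃ C : ℝ, 0 < C ∧ ∀ f : ℂ → ℂ, DifferentiableOn ℂ f (Metric.ball 0 1) → DvSq v f < ⊤ →
      ∀ ψ : ℝ → ℂ, AEStronglyMeasurable ψ (volume.restrict (Ioo 0 1)) →
        L2V2sq v ψ = L2V2sq v (fun t ↦ f t) →
        DifferentiableOn ℂ (Hop ψ) (Metric.ball 0 1) ∧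
          DvSq v (Hop ψ) ^ (1 / 2 : ℝ) ≤ ENNReal.ofReal C * DvSq v f ^ (1 / 2 : ℝ) := by
  obtain ⟨A, hA⟩ := hv.exists_L2V2sq_le hD hM1
  obtain ⟨B, hB⟩ := hv.exists_DvSq_Hop_le hD hM1 hM2
  refine ⟨((B * A + 1) ^ (1 / 2 : ℝ) : ℝ≥0), by positivity, fun f hf hfin ψ hψ heq ↦ ?_⟩
  have hL2 : L2V2sq v ψ ≤ A * DvSq v f := heq.trans_le (hA f hf)
  have h_int := hv.integrableOn_of_L2V2sq_lt_top hM2 hψ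
    (hL2.trans_lt (ENNReal.mul_lt_top ENNReal.coe_lt_top hfin))
  refine ⟨differentiableOn_Hop h_int, ?_⟩
  rw [ENNReal.ofReal_coe_nnreal, ENNReal.coe_rpow_of_nonneg _ (by norm_num),
    ← ENNReal.mul_rpow_of_nonneg _ _ (by norm_num)]
  refine ENNReal.rpow_le_rpow ?_ (by norm_num)
  calc DvSq v (Hop ψ) ≤ B * (A * DvSq v f) := (hB ψ h_int).trans (mul_le_mul_right hL2 _)
    _ = ((B * A : ℝ≥0) : ℝ≥0∞) * DvSq v f := by rw [ENNReal.coe_mul, mul_assoc]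
    _ ≤ ((B * A + 1 : ℝ≥0) : ℝ≥0∞) * DvSq v f :=
      mul_le_mul_left (ENNReal.coe_le_coe.2 le_self_add) _

end RadialWeight

/-- Corollary 1.3: if `v ∈ D̂` satisfies `M₁(v) < ∞` and `M₂(v) < ∞`,
then both the Hilbert operator `H` and the sublinear Hilbert operator `H̃` are bounded on `D_v`. -/
theorem statement6 (v : ℝ → ℝ) (hv : RadialWeight v) (hD : DoublingD v)
    (hM1 : M1v v < ⊤) (hM2 : M2v v < ⊤) :
    ∃ C : ℝ, 0 < C ∧ ∀ f : ℂ → ℂ, DifferentiableOn ℂ f (Metric.ball 0 1) →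
      DvSq v f < ⊤ →
      DifferentiableOn ℂ (Hop (fun t : ℝ => f t)) (Metric.ball 0 1) ∧
      DifferentiableOn ℂ (Htil (fun t : ℝ => f t)) (Metric.ball 0 1) ∧
      (DvSq v (Hop (fun t : ℝ => f t))) ^ (1/2 : ℝ) ≤
        ENNReal.ofReal C * (DvSq v f) ^ (1/2 : ℝ) ∧
      (DvSq v (Htil (fun t : ℝ => f t))) ^ (1/2 : ℝ) ≤
        ENNReal.ofReal C * (DvSq v f) ^ (1/2 : ℝ) := by
  obtain ⟨C, hC, hbound⟩ := hv.exists_DvSq_Hop_le_DvSq hD hM1 hM2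
  refine ⟨C, hC, fun f hf hfin ↦ ?_⟩
  have hmeas : AEStronglyMeasurable (fun t : ℝ ↦ f t) (volume.restrict (Ioo 0 1)) :=
    (hf.continuousOn.comp Complex.continuous_ofReal.continuousOn fun t ht ↦ by
      simpa [abs_of_pos ht.1] using ht.2).aestronglyMeasurable measurableSet_Ioo
  have hH := hbound f hf hfin _ hmeas rfl
  have hHtil := hbound f hf hfin _ (Complex.continuous_ofReal.comp_aestronglyMeasurable hmeas.norm)
    (L2V2sq_norm v _)
  exact ⟨hH.1, hHtil.1, hH.2, hHtil.2⟩

end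
end

section
/- Let v be a radial weight in the class D̂ satisfying M₁(v) = sup_{0<r<1} (∫_r¹ v̂(s)/(1-s)² ds)^{1/2} (∫₀^r 1/v̂(s) ds)^{1/2} < ∞ and M₂(v) = sup_{0<r<1} (∫₀^r v̂(s)/(1-s)⁴ ds)^{1/2} (∫_r¹ (1-s)²/v̂(s) ds)^{1/2} < ∞, and let g be analytic on 𝔻. If there exists K > 0 such that for every f analytic on 𝔻 with ‖f‖_{D_v} < ∞ the function H_g(f)(z) = ∫₀¹ f(t) g′(tz) dt satisfies ‖H_g(f)‖_{D_v} ≤ K · ‖f‖_{D_v}, then ‖g − g(0)‖_{B(2,∞)} < ∞; moreover ‖g − g(0)‖_{B(2,∞)} ≤ C · K for a constant C depending only on v. -/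
open MeasureTheory Real Set Filter

noncomputable section

/-!
By Parseval the `D_v`-norm is diagonal in the Taylor coefficients: `z ^ k` has squared norm
`w_k = 2 k² v_{2k-1}` for `k ≥ 1`. Doubling of `v` makes the weights `w_k` comparable on each
dyadic block `n ≤ k < 2n`. The `k`-th coefficient of `H_g f` is `b_k ∫₀¹ f(t) t^k dt`, where `b_k`
is that of `g'`. If `f` is the block polynomial `∑_{n ≤ j < 2n} z ^ j`, these moments are at least
`1/4` for `k < 2n`, so the weights cancel in the norm inequality and leave
`∑_{n ≤ k < 2n} |b_k|² ≲ K² n`. Abel summation against `r ^ (2k)` turns these block bounds into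
`M₂(r, g')² ≲ K² / (1 - r)`.
-/

open Metric
open scoped ENNReal Polynomial

section PowerSeries

variable {f : ℂ → ℂ} {c : ℕ → ℂ} {z : ℂ}

lemma hasSum_gcoef_mul_pow (hf : DifferentiableOn ℂ f (ball 0 1)) (hz : z ∈ ball (0 : ℂ) 1) :
    HasSum (fun k => gcoef f k * z ^ k) (f z) := by
  refine (Complex.hasSum_taylorSeries_on_ball hf hz).congr_fun fun k => ?_
  simp only [gcoef, sub_zero, smul_eq_mul]
  ring

lemma hasFPowerSeriesOnBall_ofScalars_of_hasSum
    (hc : ∀ z ∈ ball (0 : ℂ) 1, HasSum (fun k => c k * z ^ k) (f z)) :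
    HasFPowerSeriesOnBall f (.ofScalars ℂ c) 0 1 where
  r_le := ENNReal.le_of_forall_nnreal_lt fun r hr => by
    have hr : (r : ℂ) ∈ ball (0 : ℂ) 1 := by simpa using hr
    refine FormalMultilinearSeries.le_radius_of_summable_norm _ ?_
    simpa [FormalMultilinearSeries.ofScalars_norm] using (hc _ hr).summable.norm
  r_pos := one_pos
  hasSum {z} hz := by
    rw [zero_add]
    refine (hc z (by simpa [← ofReal_norm] using hz)).congr_fun fun k => ?_
    rw [FormalMultilinearSeries.ofScalars_apply_eq, smul_eq_mul]

lemma differentiableOn_of_hasSum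
    (hc : ∀ z ∈ ball (0 : ℂ) 1, HasSum (fun k => c k * z ^ k) (f z)) :
    DifferentiableOn ℂ f (ball 0 1) := by
  rw [← eball_ofReal, ENNReal.ofReal_one]
  exact (hasFPowerSeriesOnBall_ofScalars_of_hasSum hc).differentiableOn

lemma gcoef_eq_of_hasSum
    (hc : ∀ z ∈ ball (0 : ℂ) 1, HasSum (fun k => c k * z ^ k) (f z)) : gcoef f = c := by
  have hf := (hasFPowerSeriesOnBall_ofScalars_of_hasSum hc).hasFPowerSeriesAt
  exact FormalMultilinearSeries.ofScalars_series_injective ℂ ℂ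
    (hf.analyticAt.hasFPowerSeriesAt.eq_formalMultilinearSeries hf)

lemma gcoef_zero (f : ℂ → ℂ) : gcoef f 0 = f 0 := by simp [gcoef]

lemma gcoef_deriv (f : ℂ → ℂ) (k : ℕ) : gcoef (deriv f) k = (k + 1) * gcoef f (k + 1) := by
  simp only [gcoef, iteratedDeriv_succ', Nat.factorial_succ]
  push_cast
  field_simp

lemma gcoef_polynomial (p : ℂ[X]) (k : ℕ) : gcoef (fun z => p.eval z) k = p.coeff k := by
  refine congrFun (gcoef_eq_of_hasSum fun z _ => ?_) k
  rw [Polynomial.eval_eq_sum_range]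
  refine hasSum_sum_of_ne_finset_zero fun k hk => ?_
  rw [Polynomial.coeff_eq_zero_of_natDegree_lt (by simpa using hk), zero_mul]

end PowerSeries

section Parseval

variable {f : ℂ → ℂ} {r : ℝ}

lemma sum_range_sq_norm_eq_circleAverage (c : ℕ → ℂ) (n : ℕ) :
    ∑ k ∈ Finset.range n, ‖c k‖ ^ 2 =
      circleAverage (fun z => ‖∑ k ∈ Finset.range n, c k * z ^ k‖ ^ 2) 0 1 := by
  let p : ℂ[X] := ∑ k ∈ Finset.range n, Polynomial.monomial k (c k)
  have hcoeff (k : ℕ) : p.coeff k = if k < n then c k else 0 := by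
    simp [p, Polynomial.finsetSum_coeff, Polynomial.coeff_monomial]
  have hsupport : p.support ⊆ Finset.range n := fun k hk => by
    by_contra h
    simp_all
  calc ∑ k ∈ Finset.range n, ‖c k‖ ^ 2
      = ∑ k ∈ Finset.range n, ‖p.coeff k‖ ^ 2 :=
        Finset.sum_congr rfl fun k hk => by rw [hcoeff, if_pos (Finset.mem_range.mp hk)]
    _ = ∑ k ∈ p.support, ‖p.coeff k‖ ^ 2 :=
        (Finset.sum_subset hsupport fun k _ hk => by simp_all).symm
    _ = _ := by
        rw [p.sum_sq_norm_coeff_eq_circleAverage]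
        simp [p, Polynomial.eval_finsetSum]

lemma circleMap_zero_mem_ball (hr₀ : 0 ≤ r) (hr₁ : r < 1) (θ : ℝ) :
    circleMap 0 r θ ∈ ball (0 : ℂ) 1 := by
  simpa [abs_of_nonneg hr₀] using hr₁

lemma sq_M2mean_eq_integral (f : ℂ → ℂ) (r : ℝ) :
    M2mean f r ^ 2 = (2 * π)⁻¹ * ∫ θ in -π..π, ‖f (circleMap 0 r θ)‖ ^ 2 := by
  simp only [M2mean, circleMap_zero]
  exact Real.sq_sqrt (mul_nonneg (by positivity)
    (intervalIntegral.integral_nonneg (by linarith [pi_pos]) fun _ _ => sq_nonneg _))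

lemma sq_M2mean_eq_circleAverage (f : ℂ → ℂ) (r : ℝ) :
    M2mean f r ^ 2 = circleAverage (fun z => ‖f z‖ ^ 2) 0 r := by
  have hperiodic : Function.Periodic (fun θ => ‖f (circleMap 0 r θ)‖ ^ 2) (2 * π) := fun θ => by
    simp only [periodic_circleMap 0 r θ]
  have hshift := hperiodic.intervalIntegral_add_eq (-π) 0
  rw [show -π + 2 * π = π by ring, zero_add] at hshift
  rw [sq_M2mean_eq_integral, hshift, circleAverage, smul_eq_mul]

theorem hasSum_sq_norm_gcoef_mul_pow (hf : DifferentiableOn ℂ f (ball 0 1))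
    (hr₀ : 0 ≤ r) (hr₁ : r < 1) :
    HasSum (fun k => ‖gcoef f k‖ ^ 2 * r ^ (2 * k)) (M2mean f r ^ 2) := by
  have hsum (θ : ℝ) : HasSum (fun k => gcoef f k * r ^ k * circleMap 0 1 θ ^ k)
      (f (circleMap 0 r θ)) := by
    refine (hasSum_gcoef_mul_pow hf (circleMap_zero_mem_ball hr₀ hr₁ θ)).congr_fun fun k => ?_
    simp only [circleMap_zero, Complex.ofReal_one, one_mul]
    ring
  have hsummable : Summable fun k => ‖gcoef f k * r ^ k‖ := by
    simpa [circleMap_zero] using (hsum 0).summable.norm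
  have hpartial (n : ℕ) : ∑ k ∈ Finset.range n, ‖gcoef f k‖ ^ 2 * r ^ (2 * k) =
      circleAverage (fun z => ‖∑ k ∈ Finset.range n, gcoef f k * r ^ k * z ^ k‖ ^ 2) 0 1 := by
    rw [← sum_range_sq_norm_eq_circleAverage]
    simp [mul_pow, abs_of_nonneg hr₀, pow_mul, pow_right_comm]
  rw [hasSum_iff_tendsto_nat_of_nonneg (fun _ => by positivity), sq_M2mean_eq_circleAverage]
  simp_rw [hpartial]
  refine Tendsto.const_smul ?_ _
  refine intervalIntegral.tendsto_integral_filter_of_dominated_convergence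
    (fun _ => (∑' k, ‖gcoef f k * r ^ k‖) ^ 2) ?_ ?_ (by simp) ?_
  · exact .of_forall fun n => Continuous.aestronglyMeasurable (by fun_prop)
  · refine .of_forall fun n => .of_forall fun θ _ => ?_
    rw [norm_pow, norm_norm]
    gcongr
    calc ‖∑ k ∈ Finset.range n, gcoef f k * r ^ k * circleMap 0 1 θ ^ k‖
        ≤ ∑ k ∈ Finset.range n, ‖gcoef f k * r ^ k‖ :=
          norm_sum_le_of_le _ fun k _ => by simp
      _ ≤ ∑' k, ‖gcoef f k * r ^ k‖ := hsummable.sum_le_tsum _ fun _ _ => norm_nonneg _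
  · exact .of_forall fun θ _ => (hsum θ).tendsto_sum_nat.norm.pow 2

end Parseval

section RadialWeight

variable {v : ℝ → ℝ} {C : ℝ}

/-- The measure `v(s) ds` on `(0, 1)`; its tails are `hatw v` and its moments are `vx v`. -/
def radialMeasure (v : ℝ → ℝ) : Measure ℝ :=
  (volume.restrict (Ioo 0 1)).withDensity fun s => ENNReal.ofReal (v s)

lemma ae_radialMeasure_mem_Ioo (v : ℝ → ℝ) : ∀ᵐ s ∂radialMeasure v, s ∈ Ioo (0 : ℝ) 1 :=
  (withDensity_absolutelyContinuous _ _).ae_le (ae_restrict_mem measurableSet_Ioo)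

lemma lintegral_radialMeasure (hv : Measurable v) {F : ℝ → ℝ≥0∞} (hF : Measurable F) :
    ∫⁻ s, F s ∂radialMeasure v = ∫⁻ s in Ioo (0 : ℝ) 1, F s * ENNReal.ofReal (v s) := by
  simp_rw [radialMeasure, lintegral_withDensity_eq_lintegral_mul _ hv.ennreal_ofReal hF,
    Pi.mul_apply, mul_comm]

lemma RadialWeight.integrableOn_pow_mul (hv : RadialWeight v) (j : ℕ) :
    IntegrableOn (fun s => s ^ j * v s) (Ioo 0 1) := by
  refine hv.2.2.bdd_mul (c := 1) (by fun_prop) ?_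
  filter_upwards [ae_restrict_mem measurableSet_Ioo] with s hs
  rw [norm_pow, norm_of_nonneg hs.1.le]
  exact pow_le_one₀ hs.1.le hs.2.le

lemma vx_eq_setIntegral (v : ℝ → ℝ) (j : ℕ) : vx v j = ∫ s in Ioo (0 : ℝ) 1, s ^ j * v s := by
  rw [vx, intervalIntegral.integral_of_le zero_le_one, integral_Ioc_eq_integral_Ioo]

lemma lintegral_pow_radialMeasure (hv : RadialWeight v) (j : ℕ) :
    ∫⁻ s, ENNReal.ofReal (s ^ j) ∂radialMeasure v = ENNReal.ofReal (vx v j) := by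
  rw [lintegral_radialMeasure hv.1 (by fun_prop), vx_eq_setIntegral,
    ofReal_integral_eq_lintegral_ofReal (hv.integrableOn_pow_mul j)]
  · exact setLIntegral_congr_fun measurableSet_Ioo fun s hs =>
      (ENNReal.ofReal_mul (pow_nonneg hs.1.le j)).symm
  · filter_upwards [ae_restrict_mem measurableSet_Ioo] with s hs
    exact mul_nonneg (pow_nonneg hs.1.le j) (hv.2.1 s ⟨hs.1.le, hs.2⟩).le

lemma hatw_eq_setIntegral {r : ℝ} (hr : r ≤ 1) : hatw v r = ∫ s in Ioo r 1, v s := by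
  rw [hatw, intervalIntegral.integral_of_le hr, integral_Ioc_eq_integral_Ioo]

lemma RadialWeight.hatw_nonneg (hv : RadialWeight v) {r : ℝ} (hr : r ∈ Ico (0 : ℝ) 1) :
    0 ≤ hatw v r := by
  rw [hatw_eq_setIntegral hr.2.le]
  exact setIntegral_nonneg measurableSet_Ioo fun s hs => (hv.2.1 s ⟨hr.1.trans hs.1.le, hs.2⟩).le

lemma radialMeasure_Ici (hv : RadialWeight v) {t : ℝ} (ht : t ∈ Ico (0 : ℝ) 1) :
    radialMeasure v (Ici t) = ENNReal.ofReal (hatw v t) := by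
  have hinter : Ioi t ∩ Ioo 0 1 = Ioo t 1 := by
    ext s
    exact ⟨fun h => ⟨h.1, h.2.2⟩, fun h => ⟨h.1, ht.1.trans_lt h.1, h.2⟩⟩
  rw [radialMeasure, withDensity_apply _ measurableSet_Ici,
    ← restrict_Ioi_eq_restrict_Ici, Measure.restrict_restrict measurableSet_Ioi, hinter,
    hatw_eq_setIntegral ht.2.le,
    ofReal_integral_eq_lintegral_ofReal (hv.2.2.mono_set (Ioo_subset_Ioo_left ht.1))]
  filter_upwards [ae_restrict_mem measurableSet_Ioo] with s hs
  exact (hv.2.1 s ⟨ht.1.trans hs.1.le, hs.2⟩).le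

lemma RadialWeight.vx_pos (hv : RadialWeight v) (j : ℕ) : 0 < vx v j := by
  refine intervalIntegral.intervalIntegral_pos_of_pos_on ?_ (fun s hs => ?_) one_pos
  · exact (intervalIntegrable_iff_integrableOn_Ioo_of_le zero_le_one).2 (hv.integrableOn_pow_mul j)
  · exact mul_pos (pow_pos hs.1 j) (hv.2.1 s ⟨hs.1.le, hs.2⟩)

lemma RadialWeight.antitone_vx (hv : RadialWeight v) : Antitone (vx v) := fun i j hij => by
  rw [vx_eq_setIntegral, vx_eq_setIntegral]
  refine setIntegral_mono_on (hv.integrableOn_pow_mul j) (hv.integrableOn_pow_mul i)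
    measurableSet_Ioo fun s hs => ?_
  exact mul_le_mul_of_nonneg_right (pow_le_pow_of_le_one hs.1.le hs.2.le hij)
    (hv.2.1 s ⟨hs.1.le, hs.2⟩).le

lemma lintegral_rpow_le_of_meas_le_mul {α : Type*} [MeasurableSpace α] {μ : Measure α}
    {X Y : α → ℝ} (hX₀ : 0 ≤ᵐ[μ] X) (hX : AEMeasurable X μ) (hY₀ : 0 ≤ᵐ[μ] Y)
    (hY : AEMeasurable Y μ) {B : ℝ≥0∞} (hB : B ≠ ∞)
    (h : ∀ t > 0, μ {a | t ≤ X a} ≤ B * μ {a | t ≤ Y a}) {q : ℝ} (hq : 0 < q) :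
    ∫⁻ a, ENNReal.ofReal (X a ^ q) ∂μ ≤ B * ∫⁻ a, ENNReal.ofReal (Y a ^ q) ∂μ := by
  rw [lintegral_rpow_eq_lintegral_meas_le_mul μ hX₀ hX hq,
    lintegral_rpow_eq_lintegral_meas_le_mul μ hY₀ hY hq, mul_left_comm,
    ← lintegral_const_mul' _ _ hB]
  gcongr ENNReal.ofReal q * ?_
  refine setLIntegral_mono' measurableSet_Ioi fun t ht => ?_
  rw [← mul_assoc]
  gcongr
  exact h t ht

lemma radialMeasure_le_of_hatw_le (hv : RadialWeight v)
    (hC : ∀ r ∈ Ico (0 : ℝ) 1, hatw v r ≤ C * hatw v ((1 + r) / 2)) {t : ℝ} (ht : 0 < t) :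
    radialMeasure v {s | t ≤ s} ≤
      ENNReal.ofReal C * radialMeasure v {s | t ≤ max (2 * s - 1) 0} := by
  rcases lt_or_ge t 1 with ht₁ | ht₁
  · have hset : {s : ℝ | t ≤ max (2 * s - 1) 0} = Ici ((1 + t) / 2) := by
      ext s
      simp only [mem_ofPred_eq, le_max_iff, ht.not_ge, or_false, mem_Ici]
      constructor <;> intro h <;> linarith
    have hmem : (1 + t) / 2 ∈ Ico (0 : ℝ) 1 := ⟨by linarith, by linarith⟩
    rw [hset, radialMeasure_Ici hv hmem, ← ENNReal.ofReal_mul' (hv.hatw_nonneg hmem)]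
    exact (radialMeasure_Ici hv ⟨ht.le, ht₁⟩).trans_le
      (ENNReal.ofReal_le_ofReal (hC t ⟨ht.le, ht₁⟩))
  · have hnull : radialMeasure v {s | t ≤ s} = 0 :=
      measure_mono_null (t := {s | s ∉ Ioo (0 : ℝ) 1})
        (fun s hs hmem => (ht₁.trans hs).not_gt hmem.2) (ae_radialMeasure_mem_Ioo v)
    simp [hnull]

/-- The tail comparison is transferred to moments by the layer cake formula, after which
`2 s - 1 ≤ s ^ 2` turns the rescaled variable into a square. -/
lemma RadialWeight.vx_le_mul_vx_two_mul (hv : RadialWeight v)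
    (hC : ∀ r ∈ Ico (0 : ℝ) 1, hatw v r ≤ C * hatw v ((1 + r) / 2)) {m : ℕ} (hm : m ≠ 0) :
    vx v m ≤ C * vx v (2 * m) := by
  have hmoments : ENNReal.ofReal (vx v m) ≤ ENNReal.ofReal (C * vx v (2 * m)) := by
    rw [ENNReal.ofReal_mul' (hv.vx_pos _).le, ← lintegral_pow_radialMeasure hv,
      ← lintegral_pow_radialMeasure hv]
    have hdominated := lintegral_rpow_le_of_meas_le_mul (μ := radialMeasure v)
      (X := fun s => s) (Y := fun s => max (2 * s - 1) 0)
      ((ae_radialMeasure_mem_Ioo v).mono fun s hs => hs.1.le) (by fun_prop)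
      (.of_forall fun s => le_max_right _ _) (by fun_prop) ENNReal.ofReal_ne_top
      (fun t => radialMeasure_le_of_hatw_le hv hC) (q := m) (by positivity)
    simp only [rpow_natCast] at hdominated
    refine hdominated.trans ?_
    gcongr with s
    rw [pow_mul]
    gcongr
    exact max_le (by linarith [sq_nonneg (s - 1)]) (sq_nonneg s)
  have := hv.vx_pos m
  rcases ENNReal.ofReal_le_ofReal_iff'.1 hmoments with h | h <;> linarith

end RadialWeight

section DirichletNorm

variable {v : ℝ → ℝ} {f : ℂ → ℂ}

lemma setLIntegral_ball_eq_polar {F : ℂ → ℝ≥0∞} (hF : Measurable F) (R : ℝ) :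
    ∫⁻ z in ball 0 R, F z =
      ∫⁻ r in Ioo 0 R, ENNReal.ofReal r * ∫⁻ θ in Ioo (-π) π, F (circleMap 0 r θ) := by
  have hpolar (p : ℝ × ℝ) : Complex.polarCoord.symm p = circleMap 0 p.1 p.2 := by
    rw [Complex.polarCoord_symm_apply, circleMap_zero, Complex.exp_mul_I]
    simp
  have hmeas : Measurable fun p : ℝ × ℝ => circleMap 0 p.1 p.2 := by
    simp only [circleMap_zero]
    fun_prop
  have hangle : ∀ r ∈ Ioi (0 : ℝ),
      ∫⁻ θ in Ioo (-π) π, ENNReal.ofReal r * (ball 0 R).indicator F (circleMap 0 r θ) =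
        (Iio R).indicator
          (fun r => ENNReal.ofReal r * ∫⁻ θ in Ioo (-π) π, F (circleMap 0 r θ)) r := by
    intro r hr
    have hmem (θ : ℝ) : circleMap 0 r θ ∈ ball (0 : ℂ) R ↔ r < R := by
      simp [abs_of_pos (mem_Ioi.mp hr)]
    by_cases hrR : r < R
    · simp only [indicator_of_mem ((hmem _).2 hrR), indicator_of_mem (mem_Iio.2 hrR)]
      exact lintegral_const_mul _ (by fun_prop)
    · simp [indicator, hmem, hrR]
  rw [← lintegral_indicator measurableSet_ball, ← Complex.lintegral_comp_polarCoord_symm,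
    polarCoord_target, Measure.volume_eq_prod, ← Measure.prod_restrict]
  simp only [hpolar, smul_eq_mul]
  rw [lintegral_prod, setLIntegral_congr_fun measurableSet_Ioi hangle,
    lintegral_indicator measurableSet_Iio, Measure.restrict_restrict measurableSet_Iio,
    inter_comm, Ioi_inter_Iio]
  have := (hF.indicator (s := ball 0 R) measurableSet_ball).comp hmeas
  fun_prop

lemma setLIntegral_circle_sq_norm {h : ℂ → ℂ} {r : ℝ}
    (hh : Continuous fun θ => h (circleMap 0 r θ)) :
    ∫⁻ θ in Ioo (-π) π, ‖h (circleMap 0 r θ)‖ₑ ^ 2 =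
      ENNReal.ofReal (2 * π * M2mean h r ^ 2) := by
  have hint : IntegrableOn (fun θ => ‖h (circleMap 0 r θ)‖ ^ 2) (Ioo (-π) π) :=
    ((hh.norm.pow 2).integrableOn_Icc (a := -π) (b := π)).mono_set Ioo_subset_Icc_self
  rw [sq_M2mean_eq_integral, mul_inv_cancel_left₀ (by positivity),
    intervalIntegral.integral_of_le (by linarith [pi_pos]), integral_Ioc_eq_integral_Ioo,
    ofReal_integral_eq_lintegral_ofReal hint (.of_forall fun _ => sq_nonneg _)]
  simp_rw [ENNReal.ofReal_pow (norm_nonneg _), ofReal_norm]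

lemma DvSq_eq_setLIntegral_M2mean (hv : Measurable v) (hf : DifferentiableOn ℂ f (ball 0 1)) :
    DvSq v f = ‖f 0‖ₑ ^ 2 +
      ∫⁻ r in Ioo (0 : ℝ) 1,
        ENNReal.ofReal (2 * r * M2mean (deriv f) r ^ 2) * ENNReal.ofReal (v r) := by
  have hderiv := hf.deriv isOpen_ball
  have hcont {r : ℝ} (hr : r ∈ Ioo (0 : ℝ) 1) :
      Continuous fun θ => deriv f (circleMap 0 r θ) :=
    hderiv.continuousOn.comp_continuous (continuous_circleMap 0 r)
      (circleMap_zero_mem_ball hr.1.le hr.2)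
  have := measurable_deriv f
  rw [DvSq, setLIntegral_ball_eq_polar (by fun_prop), ← lintegral_const_mul' _ _ (by simp [pi_pos])]
  congr 1
  refine setLIntegral_congr_fun measurableSet_Ioo fun r hr => ?_
  simp only [norm_circleMap_zero, abs_of_pos hr.1]
  rw [lintegral_mul_const _ (by fun_prop)]
  change _ * (_ * ((∫⁻ θ in Ioo (-π) π, ‖deriv f (circleMap 0 r θ)‖ₑ ^ 2) * _)) = _
  rw [setLIntegral_circle_sq_norm (hcont hr), ← mul_assoc, ← mul_assoc,
    ← ENNReal.ofReal_inv_of_pos pi_pos, ← ENNReal.ofReal_mul (by positivity),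
    ← ENNReal.ofReal_mul (mul_nonneg (by positivity) hr.1.le)]
  congr 2
  field_simp

/-- The squared `D_v`-norm of the monomial `z ^ k`, that is, the weight of the squared modulus of
the `k`-th Taylor coefficient in the `D_v`-norm. -/
def monomialNormSq (v : ℝ → ℝ) : ℕ → ℝ
  | 0 => 1
  | k + 1 => 2 * (k + 1) ^ 2 * vx v (2 * k + 1)

lemma monomialNormSq_pos (hv : RadialWeight v) : ∀ k, 0 < monomialNormSq v k
  | 0 => one_pos
  | k + 1 => mul_pos (by positivity) (hv.vx_pos _)

theorem DvSq_eq_tsum (hv : RadialWeight v) (hf : DifferentiableOn ℂ f (ball 0 1)) :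
    DvSq v f = ∑' k, ENNReal.ofReal (‖gcoef f k‖ ^ 2 * monomialNormSq v k) := by
  have hseries : ∀ r ∈ Ioo (0 : ℝ) 1,
      ENNReal.ofReal (2 * r * M2mean (deriv f) r ^ 2) * ENNReal.ofReal (v r) =
        ∑' k, ENNReal.ofReal (‖gcoef f (k + 1)‖ ^ 2 * (2 * (k + 1) ^ 2)) *
          (ENNReal.ofReal (r ^ (2 * k + 1)) * ENNReal.ofReal (v r)) := by
    intro r hr
    have hsum := (hasSum_sq_norm_gcoef_mul_pow (hf.deriv isOpen_ball) hr.1.le hr.2).mul_left (2 * r)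
    rw [← hsum.tsum_eq, ENNReal.ofReal_tsum_of_nonneg (fun k => by have := hr.1; positivity)
      hsum.summable, ← ENNReal.tsum_mul_right]
    refine tsum_congr fun k => ?_
    rw [← mul_assoc (ENNReal.ofReal _),
      ← ENNReal.ofReal_mul (p := ‖_‖ ^ 2 * _) (by positivity), gcoef_deriv,
      norm_mul, ← Nat.cast_add_one, Complex.norm_natCast]
    congr 2
    push_cast
    ring
  have := hv.1
  rw [DvSq_eq_setLIntegral_M2mean hv.1 hf, setLIntegral_congr_fun measurableSet_Ioo hseries,
    lintegral_tsum fun k => by fun_prop,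
    tsum_eq_zero_add' (f := fun k => ENNReal.ofReal (_ * monomialNormSq v k)) ENNReal.summable]
  congr 1
  · simp [monomialNormSq, gcoef_zero, ENNReal.ofReal_pow]
  refine tsum_congr fun k => ?_
  rw [lintegral_const_mul _ (by fun_prop), ← lintegral_radialMeasure hv.1 (by fun_prop),
    lintegral_pow_radialMeasure hv, ← ENNReal.ofReal_mul (by positivity), mul_assoc]
  rfl

lemma DvSq_polynomial (hv : RadialWeight v) (p : ℂ[X]) :
    DvSq v (fun z => p.eval z) =
      ENNReal.ofReal (∑ k ∈ p.support, ‖p.coeff k‖ ^ 2 * monomialNormSq v k) := by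
  have hw (k : ℕ) := (monomialNormSq_pos hv k).le
  rw [DvSq_eq_tsum hv p.differentiable.differentiableOn,
    ENNReal.ofReal_sum_of_nonneg fun k _ => mul_nonneg (sq_nonneg _) (hw k),
    tsum_eq_sum (s := p.support)]
  · simp_rw [gcoef_polynomial]
  · intro k hk
    simp [gcoef_polynomial, Polynomial.notMem_support_iff.mp hk]

lemma monomialNormSq_le_mul_of_dyadic {C : ℝ} (hv : RadialWeight v)
    (hC : ∀ r ∈ Ico (0 : ℝ) 1, hatw v r ≤ C * hatw v ((1 + r) / 2)) (hC₀ : 0 ≤ C) {j k : ℕ}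
    (hj : 0 < j) (hjk : j < 2 * k) (hkj : k ≤ 2 * j) :
    monomialNormSq v k ≤ 4 * C * monomialNormSq v j := by
  obtain ⟨i, rfl⟩ := Nat.exists_eq_succ_of_ne_zero hj.ne'
  obtain ⟨l, rfl⟩ := Nat.exists_eq_succ_of_ne_zero (show k ≠ 0 by lia)
  calc monomialNormSq v (l + 1) = 2 * (l + 1) ^ 2 * vx v (2 * l + 1) := rfl
    _ ≤ 2 * (2 * (i + 1)) ^ 2 * (C * vx v (2 * (2 * l + 1))) := by
      gcongr
      · exact (hv.vx_pos _).le
      · exact_mod_cast hkj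
      · exact hv.vx_le_mul_vx_two_mul hC (by simp)
    _ ≤ 2 * (2 * (i + 1)) ^ 2 * (C * vx v (2 * i + 1)) := by
      gcongr
      exact hv.antitone_vx (by lia)
    _ = 4 * C * monomialNormSq v (i + 1) := by
      simp only [monomialNormSq]
      ring

lemma sum_Ico_monomialNormSq_le_mul {C : ℝ} (hv : RadialWeight v)
    (hC : ∀ r ∈ Ico (0 : ℝ) 1, hatw v r ≤ C * hatw v ((1 + r) / 2)) (hC₀ : 0 ≤ C) {n j : ℕ}
    (hj : j ∈ Finset.Ico n (2 * n)) :
    ∑ k ∈ Finset.Ico n (2 * n), monomialNormSq v k ≤ 4 * C * n * monomialNormSq v j := by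
  rw [Finset.mem_Ico] at hj
  calc ∑ k ∈ Finset.Ico n (2 * n), monomialNormSq v k
      ≤ (Finset.Ico n (2 * n)).card • (4 * C * monomialNormSq v j) :=
        Finset.sum_le_card_nsmul _ _ _ fun k hk => by
          rw [Finset.mem_Ico] at hk
          exact monomialNormSq_le_mul_of_dyadic hv hC hC₀ (by lia) (by lia) (by lia)
    _ = 4 * C * n * monomialNormSq v j := by
        rw [Nat.card_Ico, two_mul, Nat.add_sub_cancel, nsmul_eq_mul]
        ring

end DirichletNorm

section HilbertOperator

variable {v : ℝ → ℝ} {g f : ℂ → ℂ} {z : ℂ}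

lemma hasSum_Hg (hg : DifferentiableOn ℂ g (ball 0 1))
    (hf : IntegrableOn (fun t : ℝ => f t) (Ioo 0 1)) (hz : z ∈ ball (0 : ℂ) 1) :
    HasSum (fun k => gcoef (deriv g) k * (∫ t in Ioo (0 : ℝ) 1, f t * t ^ k) * z ^ k)
      (Hg g f z) := by
  have hderiv := hg.deriv isOpen_ball
  let F (k : ℕ) (t : ℝ) : ℂ := f t * (gcoef (deriv g) k * (t * z) ^ k)
  have hbound (k : ℕ) : ∀ᵐ t ∂volume.restrict (Ioo (0 : ℝ) 1),
      ‖F k t‖ ≤ ‖f t‖ * ‖gcoef (deriv g) k * z ^ k‖ := by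
    filter_upwards [ae_restrict_mem measurableSet_Ioo] with t ht
    have : |t| ≤ 1 := abs_le.2 ⟨by linarith [ht.1], ht.2.le⟩
    simp only [F, norm_mul, norm_pow, Complex.norm_real, norm_eq_abs]
    gcongr
    exact mul_le_of_le_one_left (norm_nonneg z) this
  have hint (k : ℕ) : IntegrableOn (F k) (Ioo 0 1) :=
    (hf.norm.mul_const _).mono' (hf.1.mul (by fun_prop)) (hbound k)
  have hsummable : Summable fun k => ∫ t in Ioo (0 : ℝ) 1, ‖F k t‖ :=
    .of_nonneg_of_le (fun k => integral_nonneg fun t => norm_nonneg _)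
      (fun k => (integral_mono_ae (hint k).norm (hf.norm.mul_const _) (hbound k)).trans_eq
        (integral_mul_const _ _))
      ((hasSum_gcoef_mul_pow hderiv hz).summable.norm.mul_left _)
  have hsum := hasSum_integral_of_summable_integral_norm hint hsummable
  have hvalue : ∫ t in Ioo (0 : ℝ) 1, ∑' k, F k t = Hg g f z := by
    refine setIntegral_congr_fun measurableSet_Ioo fun t ht => ?_
    have htz : (t : ℂ) * z ∈ ball (0 : ℂ) 1 := by
      rw [mem_ball_zero_iff, norm_mul, Complex.norm_real, norm_of_nonneg ht.1.le]
      exact mul_lt_one_of_nonneg_of_lt_one_left ht.1.le ht.2 (mem_ball_zero_iff.1 hz).le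
    exact ((hasSum_gcoef_mul_pow hderiv htz).mul_left (f t)).tsum_eq
  rw [← hvalue]
  refine hsum.congr_fun fun k => ?_
  rw [← integral_const_mul, ← integral_mul_const]
  congr! 2
  simp only [F]
  ring

lemma differentiableOn_Hg (hg : DifferentiableOn ℂ g (ball 0 1))
    (hf : IntegrableOn (fun t : ℝ => f t) (Ioo 0 1)) : DifferentiableOn ℂ (Hg g f) (ball 0 1) :=
  differentiableOn_of_hasSum fun _ => hasSum_Hg hg hf

lemma gcoef_Hg (hg : DifferentiableOn ℂ g (ball 0 1))
    (hf : IntegrableOn (fun t : ℝ => f t) (Ioo 0 1)) (k : ℕ) :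
    gcoef (Hg g f) k = gcoef (deriv g) k * ∫ t in Ioo (0 : ℝ) 1, f t * t ^ k :=
  congrFun (gcoef_eq_of_hasSum fun _ => hasSum_Hg hg hf) k

lemma setIntegral_eval_mul_pow (p : ℂ[X]) (k : ℕ) :
    ∫ t in Ioo (0 : ℝ) 1, p.eval (t : ℂ) * (t : ℂ) ^ k =
      ∑ j ∈ p.support, p.coeff j / ((j + k + 1 : ℝ) : ℂ) := by
  have hpow (n : ℕ) : ∫ t in Ioo (0 : ℝ) 1, (t : ℂ) ^ n = ((n + 1 : ℝ) : ℂ)⁻¹ := by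
    simp_rw [← Complex.ofReal_pow]
    rw [integral_complex_ofReal, ← integral_Ioc_eq_integral_Ioo,
      ← intervalIntegral.integral_of_le zero_le_one, integral_pow]
    simp
  have hint (j : ℕ) : IntegrableOn (fun t : ℝ => p.coeff j * (t : ℂ) ^ (j + k)) (Ioo 0 1) :=
    (Continuous.integrableOn_Icc (by fun_prop)).mono_set Ioo_subset_Icc_self
  simp_rw [Polynomial.eval_eq_sum, Polynomial.sum, Finset.sum_mul, mul_assoc, ← pow_add]
  rw [integral_finsetSum _ fun j _ => hint j]
  refine Finset.sum_congr rfl fun j _ => ?_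
  rw [integral_const_mul, hpow, Nat.cast_add, div_eq_mul_inv]

lemma sum_le_of_DvSq_Hg_le (hv : RadialWeight v) (hg : DifferentiableOn ℂ g (ball 0 1)) {A : ℝ}
    (hA : 0 ≤ A) {p : ℂ[X]}
    (hp : DvSq v (Hg g fun z => p.eval z) ≤ ENNReal.ofReal A * DvSq v fun z => p.eval z)
    (s : Finset ℕ) :
    ∑ k ∈ s, ‖gcoef (deriv g) k * ∫ t in Ioo (0 : ℝ) 1, p.eval (t : ℂ) * (t : ℂ) ^ k‖ ^ 2 *
        monomialNormSq v k ≤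
      A * ∑ k ∈ p.support, ‖p.coeff k‖ ^ 2 * monomialNormSq v k := by
  have hint : IntegrableOn (fun t : ℝ => p.eval (t : ℂ)) (Ioo 0 1) :=
    (Continuous.integrableOn_Icc (by fun_prop)).mono_set Ioo_subset_Icc_self
  have hterm (c : ℂ) (k : ℕ) : 0 ≤ ‖c‖ ^ 2 * monomialNormSq v k :=
    mul_nonneg (sq_nonneg _) (monomialNormSq_pos hv k).le
  rw [DvSq_polynomial hv, ← ENNReal.ofReal_mul hA, DvSq_eq_tsum hv (differentiableOn_Hg hg hint)]
    at hp
  rw [← ENNReal.ofReal_le_ofReal_iff (mul_nonneg hA (Finset.sum_nonneg fun k _ => hterm _ k)),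
    ENNReal.ofReal_sum_of_nonneg fun k _ => hterm _ k]
  simp_rw [← gcoef_Hg (f := fun z => p.eval z) hg hint]
  exact (ENNReal.sum_le_tsum s).trans hp

lemma sq_norm_gcoef_deriv_zero_le (hv : RadialWeight v) (hg : DifferentiableOn ℂ g (ball 0 1))
    {A : ℝ} (hA : 0 ≤ A)
    (hone : DvSq v (Hg g fun z => (1 : ℂ[X]).eval z) ≤
      ENNReal.ofReal A * DvSq v fun z => (1 : ℂ[X]).eval z) :
    ‖gcoef (deriv g) 0‖ ^ 2 ≤ A := by
  have := sum_le_of_DvSq_Hg_le hv hg hA hone {0}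
  rw [Finset.sum_singleton, setIntegral_eval_mul_pow, ← Polynomial.C_1,
    Polynomial.support_C one_ne_zero] at this
  simpa [monomialNormSq] using this

/-- The block polynomial `∑ z ^ k` over `n ≤ k < 2 n`, on which the operator is tested. -/
def dyadicPoly (n : ℕ) : ℂ[X] := ∑ k ∈ Finset.Ico n (2 * n), Polynomial.X ^ k

lemma coeff_dyadicPoly (n k : ℕ) :
    (dyadicPoly n).coeff k = if k ∈ Finset.Ico n (2 * n) then 1 else 0 := by
  simp [dyadicPoly, Polynomial.finsetSum_coeff, Polynomial.coeff_X_pow]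

lemma support_dyadicPoly (n : ℕ) : (dyadicPoly n).support = Finset.Ico n (2 * n) := by
  ext k
  simp [Polynomial.mem_support_iff, coeff_dyadicPoly]

lemma one_fourth_le_norm_setIntegral_dyadicPoly {n k : ℕ} (hk : k < 2 * n) :
    1 / 4 ≤ ‖∫ t in Ioo (0 : ℝ) 1, (dyadicPoly n).eval (t : ℂ) * (t : ℂ) ^ k‖ := by
  have hn : (0 : ℝ) < n := by exact_mod_cast (by lia : 0 < n)
  have hmoment : ∫ t in Ioo (0 : ℝ) 1, (dyadicPoly n).eval (t : ℂ) * (t : ℂ) ^ k =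
      ((∑ j ∈ Finset.Ico n (2 * n), 1 / (j + k + 1 : ℝ) : ℝ) : ℂ) := by
    rw [setIntegral_eval_mul_pow, support_dyadicPoly, Complex.ofReal_sum]
    refine Finset.sum_congr rfl fun j hj => ?_
    rw [coeff_dyadicPoly, if_pos hj, Complex.ofReal_div, Complex.ofReal_one]
  rw [hmoment, Complex.norm_real, norm_of_nonneg (by positivity)]
  calc (1 / 4 : ℝ) = ∑ j ∈ Finset.Ico n (2 * n), 1 / (4 * n : ℝ) := by
        rw [Finset.sum_const, Nat.card_Ico, two_mul, Nat.add_sub_cancel, nsmul_eq_mul]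
        field_simp
    _ ≤ ∑ j ∈ Finset.Ico n (2 * n), 1 / (j + k + 1 : ℝ) := by
        refine Finset.sum_le_sum fun j hj => ?_
        gcongr
        have hj := (Finset.mem_Ico.1 hj).2
        exact_mod_cast (by lia : j + k + 1 ≤ 4 * n)

lemma sum_Ico_sq_norm_gcoef_deriv_le (hv : RadialWeight v)
    (hg : DifferentiableOn ℂ g (ball 0 1)) {A C : ℝ} (hA : 0 ≤ A) (hC₀ : 0 ≤ C)
    (hC : ∀ r ∈ Ico (0 : ℝ) 1, hatw v r ≤ C * hatw v ((1 + r) / 2)) {n : ℕ} (hn : 0 < n)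
    (hblock : DvSq v (Hg g fun z => (dyadicPoly n).eval z) ≤
      ENNReal.ofReal A * DvSq v fun z => (dyadicPoly n).eval z) :
    ∑ k ∈ Finset.Ico n (2 * n), ‖gcoef (deriv g) k‖ ^ 2 ≤ 64 * C * A * n := by
  set I := Finset.Ico n (2 * n)
  set W := ∑ k ∈ I, monomialNormSq v k
  have hw (k : ℕ) := monomialNormSq_pos hv k
  have hW : 0 < W := Finset.sum_pos (fun k _ => hw k) ⟨n, Finset.mem_Ico.2 ⟨le_rfl, by lia⟩⟩
  have htest : ∑ k ∈ I, ‖gcoef (deriv g) k‖ ^ 2 * (1 / 16 * monomialNormSq v k) ≤ A * W := by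
    have hbound := sum_le_of_DvSq_Hg_le hv hg hA hblock I
    have hrhs : ∑ k ∈ I, ‖(dyadicPoly n).coeff k‖ ^ 2 * monomialNormSq v k = W :=
      Finset.sum_congr rfl fun k hk => by
        rw [coeff_dyadicPoly, if_pos hk, norm_one, one_pow, one_mul]
    rw [support_dyadicPoly, hrhs] at hbound
    refine (Finset.sum_le_sum fun k hk => ?_).trans hbound
    have hmoment := one_fourth_le_norm_setIntegral_dyadicPoly (Finset.mem_Ico.1 hk).2
    rw [norm_mul, mul_pow, mul_assoc]
    gcongr
    · exact (hw k).le
    · nlinarith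
  refine le_of_mul_le_mul_right ?_ hW
  calc (∑ k ∈ I, ‖gcoef (deriv g) k‖ ^ 2) * W
      ≤ ∑ k ∈ I, ‖gcoef (deriv g) k‖ ^ 2 * (4 * C * n * monomialNormSq v k) := by
        rw [Finset.sum_mul]
        exact Finset.sum_le_sum fun k hk => by
          gcongr; exact sum_Ico_monomialNormSq_le_mul hv hC hC₀ hk
    _ = 64 * C * n * ∑ k ∈ I, ‖gcoef (deriv g) k‖ ^ 2 * (1 / 16 * monomialNormSq v k) := by
        rw [Finset.mul_sum]
        exact Finset.sum_congr rfl fun k _ => by ring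
    _ ≤ 64 * C * n * (A * W) := by gcongr
    _ = 64 * C * A * n * W := by ring

end HilbertOperator

section PartialSums

lemma sum_range_le_of_dyadic_blocks {a : ℕ → ℝ} (ha : ∀ k, 0 ≤ a k) {D : ℝ} (hzero : a 0 ≤ D)
    (hblock : ∀ n > 0, ∑ k ∈ Finset.Ico n (2 * n), a k ≤ D * n) (n : ℕ) :
    ∑ k ∈ Finset.range n, a k ≤ 2 * D * n := by
  have hpow (j : ℕ) : ∑ k ∈ Finset.range (2 ^ j), a k ≤ D * 2 ^ j := by
    induction j with
    | zero => simpa using hzero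
    | succ j ih =>
      have hle : 2 ^ j ≤ 2 * 2 ^ j := by lia
      have hb := hblock (2 ^ j) (by positivity)
      push_cast at hb
      rw [pow_succ', ← Finset.sum_range_add_sum_Ico a hle, pow_succ']
      linarith
  rcases n.eq_zero_or_pos with rfl | hn
  · simp
  have hD : 0 ≤ D := (ha 0).trans hzero
  have hlt : n ≤ 2 ^ (Nat.log 2 n + 1) := (Nat.lt_pow_succ_log_self one_lt_two n).le
  have hle : ((2 ^ Nat.log 2 n : ℕ) : ℝ) ≤ n := by exact_mod_cast Nat.pow_log_le_self 2 hn.ne'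
  push_cast at hle
  calc ∑ k ∈ Finset.range n, a k ≤ ∑ k ∈ Finset.range (2 ^ (Nat.log 2 n + 1)), a k :=
        Finset.sum_le_sum_of_subset_of_nonneg (Finset.range_mono hlt) fun k _ _ => ha k
    _ ≤ D * 2 ^ (Nat.log 2 n + 1) := hpow _
    _ = 2 * D * 2 ^ Nat.log 2 n := by ring
    _ ≤ 2 * D * n := by gcongr

lemma sum_range_mul_le_of_antitone {a c w : ℕ → ℝ} (hw : Antitone w) (hw₀ : ∀ k, 0 ≤ w k)
    (hac : ∀ n, ∑ k ∈ Finset.range n, a k ≤ ∑ k ∈ Finset.range n, c k) (n : ℕ) :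
    ∑ k ∈ Finset.range n, a k * w k ≤ ∑ k ∈ Finset.range n, c k * w k := by
  suffices habel : (∑ k ∈ Finset.range n, c k - ∑ k ∈ Finset.range n, a k) * w n ≤
      ∑ k ∈ Finset.range n, c k * w k - ∑ k ∈ Finset.range n, a k * w k by
    linarith [mul_nonneg (sub_nonneg.2 (hac n)) (hw₀ n)]
  induction n with
  | zero => simp
  | succ n ih =>
    have hstep := mul_le_mul_of_nonneg_left (hw n.le_succ) (sub_nonneg.2 (hac (n + 1)))
    simp only [Finset.sum_range_succ] at hstep ⊢
    linarith

lemma M2mean_mul_sqrt_one_sub_le {h : ℂ → ℂ} (hh : DifferentiableOn ℂ h (ball 0 1)) {E : ℝ}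
    (hE : ∀ n : ℕ, ∑ k ∈ Finset.range n, ‖gcoef h k‖ ^ 2 ≤ E * n) {r : ℝ}
    (hr₀ : 0 ≤ r) (hr₁ : r < 1) : M2mean h r * √(1 - r) ≤ √E := by
  have hr : 0 < 1 - r := sub_pos.2 hr₁
  have hE₀ : 0 ≤ E := (sq_nonneg ‖gcoef h 0‖).trans (by simpa using hE 1)
  have hpow : Antitone fun k : ℕ => r ^ (2 * k) := fun i j hij =>
    pow_le_pow_of_le_one hr₀ hr₁.le (by lia)
  have hgeom : HasSum (fun k : ℕ => E * r ^ (2 * k)) (E * (1 - r ^ 2)⁻¹) := by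
    simp_rw [pow_mul]
    exact (hasSum_geometric_of_lt_one (sq_nonneg r) (by nlinarith)).mul_left E
  have hsq : M2mean h r ^ 2 ≤ E * (1 - r ^ 2)⁻¹ :=
    le_of_tendsto_of_tendsto'
      (hasSum_sq_norm_gcoef_mul_pow hh hr₀ hr₁).tendsto_sum_nat hgeom.tendsto_sum_nat
      (sum_range_mul_le_of_antitone hpow (fun k => by positivity) fun n => by
        simpa [mul_comm] using hE n)
  refine Real.le_sqrt_of_sq_le ?_
  calc (M2mean h r * √(1 - r)) ^ 2 = M2mean h r ^ 2 * (1 - r) := by rw [mul_pow, Real.sq_sqrt hr.le]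
    _ ≤ E * (1 - r ^ 2)⁻¹ * (1 - r) := by gcongr
    _ ≤ E * (1 - r)⁻¹ * (1 - r) := by gcongr; nlinarith
    _ = E := by field_simp

end PartialSums

lemma le_sq_mul_of_rpow_half_le {a b : ℝ≥0∞} {K : ℝ} (hK : 0 ≤ K)
    (h : a ^ (1 / 2 : ℝ) ≤ ENNReal.ofReal K * b ^ (1 / 2 : ℝ)) :
    a ≤ ENNReal.ofReal (K ^ 2) * b := by
  have hsq (x : ℝ≥0∞) : (x ^ (1 / 2 : ℝ)) ^ 2 = x := by
    rw [← ENNReal.rpow_natCast, ← ENNReal.rpow_mul]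
    norm_num
  have := pow_le_pow_left₀ zero_le h 2
  rwa [mul_pow, hsq, hsq, ← ENNReal.ofReal_pow hK] at this

theorem statement8_general (v : ℝ → ℝ) (hv : RadialWeight v) (hD : DoublingD v) :
    ∃ C : ℝ, 0 < C ∧ ∀ g : ℂ → ℂ, DifferentiableOn ℂ g (ball 0 1) → ∀ K : ℝ, 0 ≤ K →
      (∀ p : ℂ[X], (DvSq v (Hg g fun z => p.eval z)) ^ (1 / 2 : ℝ) ≤
        ENNReal.ofReal K * (DvSq v fun z => p.eval z) ^ (1 / 2 : ℝ)) →
      B2infE (fun z => g z - g 0) ≤ ENNReal.ofReal (C * K) := by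
  obtain ⟨C, hC₁, hC⟩ := hD
  refine ⟨√(128 * C), by positivity, fun g hg K hK hbdd => ?_⟩
  have hbdd' (p : ℂ[X]) := le_sq_mul_of_rpow_half_le hK (hbdd p)
  have hzero : ‖gcoef (deriv g) 0‖ ^ 2 ≤ 64 * C * K ^ 2 :=
    (sq_norm_gcoef_deriv_zero_le hv hg (sq_nonneg K) (hbdd' 1)).trans (by nlinarith [sq_nonneg K])
  have hblock (n : ℕ) (hn : n > 0) :
      ∑ k ∈ Finset.Ico n (2 * n), ‖gcoef (deriv g) k‖ ^ 2 ≤ 64 * C * K ^ 2 * n :=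
    sum_Ico_sq_norm_gcoef_deriv_le hv hg (sq_nonneg K) (by linarith) hC hn (hbdd' _)
  have hpartial (n : ℕ) : ∑ k ∈ Finset.range n, ‖gcoef (deriv g) k‖ ^ 2 ≤ 128 * C * K ^ 2 * n :=
    (sum_range_le_of_dyadic_blocks (a := fun k => ‖gcoef (deriv g) k‖ ^ 2)
      (fun _ => sq_nonneg _) hzero hblock n).trans_eq (by ring)
  rw [B2infE, deriv_sub_const_fun, sub_self, nnnorm_zero, ENNReal.coe_zero, zero_add,
    ← Real.sqrt_sq hK, ← Real.sqrt_mul (by positivity)]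
  exact iSup₂_le fun r hr => ENNReal.ofReal_le_ofReal
    (M2mean_mul_sqrt_one_sub_le (hg.deriv isOpen_ball) hpartial hr.1.le hr.2)

/-- necessity in Proposition 3.1: if `H_g` is bounded on `D_v` with norm `K`,
then `‖g - g(0)‖_{B(2,∞)} < ∞` and in fact `‖g - g(0)‖_{B(2,∞)} ≤ C K` with `C = C(v)`. -/
theorem statement8 (v : ℝ → ℝ) (hv : RadialWeight v) (hD : DoublingD v)
    (hM1 : M1v v < ⊤) (hM2 : M2v v < ⊤) :
    ∃ C : ℝ, 0 < C ∧ ∀ g : ℂ → ℂ, DifferentiableOn ℂ g (Metric.ball 0 1) →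
      ∀ K : ℝ, 0 < K →
      (∀ f : ℂ → ℂ, DifferentiableOn ℂ f (Metric.ball 0 1) → DvSq v f < ⊤ →
        (DvSq v (Hg g f)) ^ (1/2 : ℝ) ≤ ENNReal.ofReal K * (DvSq v f) ^ (1/2 : ℝ)) →
      B2infE (fun z => g z - g 0) < ⊤ ∧
      B2infE (fun z => g z - g 0) ≤ ENNReal.ofReal (C * K) := by
  obtain ⟨C, hC, hbound⟩ := statement8_general v hv hD
  refine ⟨C, hC, fun g hg K hK hbdd => ?_⟩
  have hle := hbound g hg K hK.le fun p => hbdd _ p.differentiable.differentiableOn <| by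
    simp [DvSq_polynomial hv]
  exact ⟨hle.trans_lt ENNReal.ofReal_lt_top, hle⟩

end
end
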